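/- There exists a constant C > 0, depending only on n, such that for every λ > 0 and every smooth ℤⁿ-periodic φ : ℝⁿ → ℝ with Δφ = −λ²φ and ∫_Q φ(x)² dx = 1, the nodal set satisfies μH^{n−1}(N_φ) ≥ C λ^{7/4 − 3n/4}. -/

import Mathlib

/-!
The bound proved here is stronger than the one stated: with `n = k + 1`, the nodal set of the unit
cube has `(n-1)`-dimensional measure at least `C lam`. Since a nonzero eigenfunction has
`lam ≥ 2π > 1` and `7/4 - 3n/4 ≤ 1` for `n ≥ 2`, this suffices. The argument is elementary and uses
that, by Green's identity against exponentials, an eigenfunction `ψ` on the torus is a trigonometric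
polynomial with frequencies on the sphere `4π²|K|² = lam²` (`exists_trigPoly`).

*Doubling at most points.* On a line, a trigonometric polynomial has the absolute value of an
algebraic polynomial `p` on the unit circle, and `p` factors as `c ∏ (1 - aⱼ w)` with `|aⱼ| ≤ 1` up
to unimodular factors. Moving `w` by `O(1/deg p)` changes `log |p|` by a bounded amount wherever
`∑ |1 - aⱼ w|⁻² = O(deg²)` and `|∑ (1 - aⱼ w)⁻¹| = O(deg)`. Both hold off a set of small measure
(`weak_type`): the second is a Kolmogorov weak-type bound for the function `∑ (1 - bⱼ z)⁻¹`, which is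
holomorphic with nonnegative real part (`weak_H`). Applying this coordinate by coordinate to the
successive averages of `ψ²` gives `∫_{x + [-s,s]ⁿ} ψ² ≤ (2sA)ⁿ ψ(x)²` for all `x` in the unit cube
off a set of small measure, where `s ~ 1/lam` (`doubling_n`).

*Sign changes in cells.* Tile the unit cube by `mⁿ` cells of side `s = 1/m` with `m ~ lam`. On each
cell there is a weight `0 ≤ W ≤ 1`, bounded below on the concentric half-size cube, with
`∫ W ψ = 0` (`exists_weight`): it is a multiple of `(Δ + lam²) v` for
`v = ∏ sin²(π (xᵢ - aᵢ)/s)`, which vanishes to second order on the boundary of the cell. In a cell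
where the doubling exceptional set has small proportion, `|ψ|` is comparable to its `L²` mean on
much of the half-size cube, so the orthogonality forces `{ψ > 0}` and `{ψ < 0}` both to fill a
fixed proportion of the cell (`sign_cell`).

*Isoperimetry.* Walking from a point of `{ψ > 0}` to a point of `{ψ < 0}` along coordinate segments
crosses the nodal set; integrating over pairs of points shows that the coordinate projections of
the nodal set in the cell have total measure at least a constant times `s^(n-1)` (`iso_cell`), and
projections do not increase Hausdorff measure. At least half of the `mⁿ` cells contribute
(`sum_good_cells`), for a total of order `mⁿ · m^{-(n-1)} = m ~ lam`.
-/

open MeasureTheory Real Set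

noncomputable section

/-- The Euclidean Laplacian `Δφ = Σᵢ ∂²φ/∂xᵢ²`. -/
def lap {n : ℕ} (φ : EuclideanSpace ℝ (Fin n) → ℝ) (x : EuclideanSpace ℝ (Fin n)) : ℝ :=
  ∑ i : Fin n,
    fderiv ℝ (fun y => fderiv ℝ φ y (EuclideanSpace.single i 1)) x (EuclideanSpace.single i 1)

/-- `ℤⁿ`-periodicity of a function on `ℝⁿ`. -/
def ZPeriodic {n : ℕ} (φ : EuclideanSpace ℝ (Fin n) → ℝ) : Prop :=
  ∀ (x : EuclideanSpace ℝ (Fin n)) (k : Fin n → ℤ),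
    φ (x + (WithLp.equiv 2 (Fin n → ℝ)).symm fun i => (k i : ℝ)) = φ x

/-- The fundamental domain `Q = [0,1)ⁿ`. -/
def Qcube (n : ℕ) : Set (EuclideanSpace ℝ (Fin n)) :=
  {x | ∀ i, x i ∈ Set.Ico (0 : ℝ) 1}

/-! ### Exponentials on the circle and a weak-type estimate -/

/-- The character `e(t) = exp(2πit)` of `ℝ/ℤ`. -/
def ee (t : ℝ) : ℂ := Complex.exp (2 * π * t * Complex.I)

lemma norm_ee (t : ℝ) : ‖ee t‖ = 1 := by
  unfold ee
  rw [show (2 * π * t * Complex.I : ℂ) = ((2 * π * t : ℝ) : ℂ) * Complex.I by push_cast; ring]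
  exact Complex.norm_exp_ofReal_mul_I _

lemma ee_add (s t : ℝ) : ee (s + t) = ee s * ee t := by
  unfold ee
  rw [← Complex.exp_add]; congr 1; push_cast; ring

lemma continuous_ee : Continuous ee := by unfold ee; fun_prop

lemma norm_ee_sub_one_le (t : ℝ) : ‖ee t - 1‖ ≤ 2 * π * |t| := by
  have := Real.norm_exp_I_mul_ofReal_sub_one_le (x := 2 * π * t)
  unfold ee
  rw [show (2 * π * t * Complex.I : ℂ) = Complex.I * ((2 * π * t : ℝ) : ℂ) by push_cast; ring]
  refine this.trans (le_of_eq ?_)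
  rw [Real.norm_eq_abs, abs_mul, abs_of_pos two_pi_pos]

lemma integral_ee_eq_circleAverage (G : ℂ → ℝ) :
    ∫ t in (0:ℝ)..1, G (ee t) = Real.circleAverage G 0 1 := by
  rw [Real.circleAverage_def]
  have h := intervalIntegral.integral_comp_mul_left (a := 0) (b := 1)
    (fun θ => G (circleMap 0 1 θ)) (c := 2 * π) (by positivity)
  simp only [mul_zero, mul_one] at h
  rw [← h]
  congr 1
  ext t
  simp [circleMap, ee]

lemma re_inv_one_sub {z : ℂ} (hz : ‖z‖ < 1) : 0 ≤ ((1 - z)⁻¹).re := by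
  rw [Complex.inv_re]
  apply div_nonneg _ (Complex.normSq_nonneg _)
  have := (Complex.abs_re_le_norm z).trans_lt hz
  rw [abs_lt] at this
  simp; linarith

lemma one_sub_ne {z : ℂ} (hz : ‖z‖ < 1) : 1 - z ≠ 0 := by
  intro h
  have : z = 1 := by linear_combination -h
  rw [this] at hz; simp at hz

/-- The mean value property for real parts. -/
lemma integral_re_ee {F : ℂ → ℂ} (hF : ∀ z, ‖z‖ ≤ 1 → DifferentiableAt ℂ F z) :
    ∫ t in (0:ℝ)..1, (F (ee t)).re = (F 0).re := by
  rw [integral_ee_eq_circleAverage (fun z => (F z).re)]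
  have hd : DiffContOnCl ℂ F (Metric.ball 0 |(1:ℝ)|) := by
    apply DifferentiableOn.diffContOnCl
    intro z hz
    have : z ∈ Metric.closedBall (0:ℂ) |(1:ℝ)| := Metric.closure_ball_subset_closedBall hz
    apply (hF z _).differentiableWithinAt
    simpa using this
  have h1 := hd.circleAverage
  rw [← h1]
  rw [Real.circleAverage_def, Real.circleAverage_def]
  have hc : Continuous fun θ : ℝ => F (circleMap 0 1 θ) := by
    rw [continuous_iff_continuousAt]
    intro θ
    apply ContinuousAt.comp (g := F) (hF _ (by simp)).continuousAt
    exact (continuous_circleMap 0 1).continuousAt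
  have := intervalIntegral.intervalIntegral_re (hc.intervalIntegrable 0 (2*π)) (μ := volume) (𝕜 := ℂ)
  simp only [smul_eq_mul, Complex.real_smul, Complex.re_ofReal_mul]
  congr 1

/-- Kolmogorov's weak-type bound: `H(z) = ∑ (1 - bⱼ z)⁻¹` has nonnegative real part on the closed
disc, so `Re (1 - α/(H + α))` is nonnegative, is at least `1/2` where `|H| ≥ 3α`, and has mean
`N/(N + α)` by the mean value property. -/
lemma weak_H {N : ℕ} (b : Fin N → ℂ) (hb : ∀ j, ‖b j‖ < 1) {α : ℝ} (hα : 0 < α) :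
    volume {t ∈ Icc (0:ℝ) 1 | 3 * α ≤ ‖∑ j, (1 - b j * ee t)⁻¹‖} ≤ ENNReal.ofReal (2 * N / α) := by
  set H : ℂ → ℂ := fun z => ∑ j, (1 - b j * z)⁻¹ with hH
  have hbz : ∀ j z, ‖z‖ ≤ 1 → ‖b j * z‖ < 1 := by
    intro j z hz
    rw [norm_mul]
    calc _ ≤ ‖b j‖ * 1 := by gcongr
      _ < 1 := by simpa using hb j
  have hHre : ∀ z, ‖z‖ ≤ 1 → 0 ≤ (H z).re := by
    intro z hz
    rw [hH, Complex.re_sum]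
    exact Finset.sum_nonneg fun j _ => re_inv_one_sub (hbz j z hz)
  have hHα : ∀ z, ‖z‖ ≤ 1 → α ≤ ‖H z + α‖ := by
    intro z hz
    calc α ≤ (H z + α).re := by simpa using hHre z hz
      _ ≤ _ := Complex.re_le_norm _
  set F : ℂ → ℂ := fun z => 1 - α / (H z + α) with hFdef
  have hHd : ∀ z, ‖z‖ ≤ 1 → DifferentiableAt ℂ H z := by
    intro z hz
    rw [hH]
    apply DifferentiableAt.fun_sum
    intro j _
    exact DifferentiableAt.fun_inv (h := fun y => 1 - b j * y) (by fun_prop) (one_sub_ne (hbz j z hz))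
  have hne : ∀ z, ‖z‖ ≤ 1 → H z + α ≠ 0 := by
    intro z hz h
    have := hHα z hz
    rw [h] at this; simp at this; linarith
  have hFd : ∀ z, ‖z‖ ≤ 1 → DifferentiableAt ℂ F z := by
    intro z hz
    have := hHd z hz
    apply DifferentiableAt.const_sub
    exact DifferentiableAt.fun_div (d := fun y => H y + α) (by fun_prop) (by fun_prop) (hne z hz)
  have hintg := integral_re_ee hFd
  have hF0 : (F 0).re = N / (N + α) := by
    have : F 0 = ((N / (N + α) : ℝ) : ℂ) := by
      have hN : ((N:ℂ) + α) ≠ 0 := by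
        have : ((N:ℝ) + α) ≠ 0 := by positivity
        exact_mod_cast this
      simp only [hFdef, hH]
      simp
      field_simp
      ring
    rw [this, Complex.ofReal_re]
  have hFnn : ∀ z, ‖z‖ ≤ 1 → 0 ≤ (F z).re := by
    intro z hz
    have h1 : ‖(α:ℂ) / (H z + α)‖ ≤ 1 := by
      rw [norm_div, Complex.norm_real, Real.norm_of_nonneg hα.le]
      exact div_le_one_of_le₀ (hHα z hz) (norm_nonneg _)
    have h2 := (Complex.re_le_norm _).trans h1
    simp only [hFdef, Complex.sub_re, Complex.one_re]
    linarith
  have hFbig : ∀ z, ‖z‖ ≤ 1 → 3 * α ≤ ‖H z‖ → 1/2 ≤ (F z).re := by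
    intro z hz h3
    have h0 : 2 * α ≤ ‖H z + α‖ := by
      have := norm_sub_le (H z + α) α
      simp only [add_sub_cancel_right, Complex.norm_real, Real.norm_of_nonneg hα.le] at this
      linarith
    have h1 : ‖(α:ℂ) / (H z + α)‖ ≤ 1/2 := by
      rw [norm_div, Complex.norm_real, Real.norm_of_nonneg hα.le, div_le_iff₀ (by linarith)]
      linarith
    have h2 := (Complex.re_le_norm _).trans h1
    simp only [hFdef, Complex.sub_re, Complex.one_re]
    linarith
  have hcont : Continuous fun t => (F (ee t)).re := by
    apply Complex.continuous_re.comp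
    rw [continuous_iff_continuousAt]
    intro θ
    exact ContinuousAt.comp (g := F) (hFd _ (norm_ee _).le).continuousAt continuous_ee.continuousAt
  have hmark := mul_meas_ge_le_lintegral₀ (μ := volume.restrict (Icc (0:ℝ) 1))
    (f := fun t => ENNReal.ofReal (F (ee t)).re)
    hcont.measurable.ennreal_ofReal.aemeasurable (ENNReal.ofReal (1/2))
  have hI : ∫⁻ t in Icc (0:ℝ) 1, ENNReal.ofReal (F (ee t)).re = ENNReal.ofReal (N / (N + α)) := by
    rw [← ofReal_integral_eq_lintegral_ofReal, integral_Icc_eq_integral_Ioc,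
      ← intervalIntegral.integral_of_le zero_le_one, hintg, hF0]
    · exact hcont.integrableOn_Icc
    · exact Filter.Eventually.of_forall fun t => hFnn _ (norm_ee t).le
  rw [hI] at hmark
  have hsub : {t ∈ Icc (0:ℝ) 1 | 3 * α ≤ ‖∑ j, (1 - b j * ee t)⁻¹‖} ⊆
      {t | ENNReal.ofReal (1/2) ≤ ENNReal.ofReal (F (ee t)).re} ∩ Icc 0 1 := by
    intro t ht
    exact ⟨ENNReal.ofReal_le_ofReal (hFbig _ (norm_ee t).le ht.2), ht.1⟩
  calc _ ≤ _ := measure_mono hsub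
    _ ≤ (volume.restrict (Icc (0:ℝ) 1)) _ := Measure.le_restrict_apply _ _
    _ = ENNReal.ofReal 2 * (ENNReal.ofReal (1/2) * (volume.restrict (Icc (0:ℝ) 1))
          {t | ENNReal.ofReal (1/2) ≤ ENNReal.ofReal (F (ee t)).re}) := by
        rw [← mul_assoc, ← ENNReal.ofReal_mul (by norm_num)]; norm_num
    _ ≤ ENNReal.ofReal 2 * ENNReal.ofReal (N / (N + α)) := by gcongr
    _ = ENNReal.ofReal (2 * (N / (N + α))) := by rw [← ENNReal.ofReal_mul (by norm_num)]
    _ ≤ _ := by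
        apply ENNReal.ofReal_le_ofReal
        rw [mul_div_assoc]
        gcongr
        have : (0:ℝ) ≤ N := by positivity
        linarith

/-- The bound `|1 - bw|⁻² ≤ (1 - |b|)⁻¹ Re (1 - bw)⁻¹` on the circle, integrated with the mean value
property. -/
lemma integral_poisson {b : ℂ} (hb : ‖b‖ < 1) :
    ∫⁻ t in Icc (0:ℝ) 1, ENNReal.ofReal ((‖1 - b * ee t‖ ^ 2)⁻¹) ≤
      ENNReal.ofReal ((1 - ‖b‖)⁻¹) := by
  have hbz : ∀ z, ‖z‖ ≤ 1 → ‖b * z‖ < 1 := by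
    intro z hz
    rw [norm_mul]
    calc _ ≤ ‖b‖ * 1 := by gcongr
      _ < 1 := by simpa using hb
  have hFd : ∀ z, ‖z‖ ≤ 1 → DifferentiableAt ℂ (fun z => (1 - b * z)⁻¹) z := by
    intro z hz
    exact DifferentiableAt.fun_inv (h := fun y => 1 - b * y) (by fun_prop) (one_sub_ne (hbz z hz))
  have hintg := integral_re_ee hFd
  have hcont : Continuous fun t => ((1 - b * ee t)⁻¹).re := by
    apply Complex.continuous_re.comp
    apply Continuous.inv₀
    · have := continuous_ee; fun_prop
    · intro t; exact one_sub_ne (hbz _ (norm_ee t).le)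
  have key : ∀ t, (‖1 - b * ee t‖ ^ 2)⁻¹ ≤ (1 - ‖b‖)⁻¹ * ((1 - b * ee t)⁻¹).re := by
    intro t
    have hz := hbz (ee t) (norm_ee t).le
    have hnb : ‖b * ee t‖ = ‖b‖ := by rw [norm_mul, norm_ee, mul_one]
    rw [Complex.inv_re, ← Complex.normSq_eq_norm_sq, div_eq_mul_inv, ← mul_assoc]
    apply le_mul_of_one_le_left (inv_nonneg.2 (Complex.normSq_nonneg _))
    rw [inv_mul_eq_div, le_div_iff₀ (by linarith)]
    have := Complex.re_le_norm (b * ee t)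
    simp only [Complex.sub_re, Complex.one_re]
    linarith
  calc _ ≤ ∫⁻ t in Icc (0:ℝ) 1, ENNReal.ofReal ((1 - ‖b‖)⁻¹ * ((1 - b * ee t)⁻¹).re) :=
        lintegral_mono fun t => ENNReal.ofReal_le_ofReal (key t)
    _ = ENNReal.ofReal (∫ t in Icc (0:ℝ) 1, (1 - ‖b‖)⁻¹ * ((1 - b * ee t)⁻¹).re) := by
        rw [← ofReal_integral_eq_lintegral_ofReal]
        · exact (hcont.const_mul _).integrableOn_Icc
        · refine Filter.Eventually.of_forall fun t => ?_
          exact le_trans (by positivity) (key t)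
    _ = _ := by
        rw [integral_const_mul, integral_Icc_eq_integral_Ioc,
          ← intervalIntegral.integral_of_le zero_le_one, hintg]
        simp

/-! ### Doubling of polynomials on the circle -/

/-- Off a set of measure `ε`, the sums `∑ |1 - aⱼ w|⁻²` and `∑ (1 - aⱼ w)⁻¹` on the unit circle are
of the order of the square and the first power of the degree. The points `aⱼ` are contracted to
`bⱼ = (1 - η) aⱼ` with `η ~ 1/M`, where `integral_poisson` and `weak_H` apply; outside the first
exceptional set no `1 - aⱼ w` is small, so passing back from `b` to `a` costs a constant. -/
lemma weak_type (ε : ℝ) (hε : 0 < ε) : ∃ K : ℝ, 0 < K ∧ ∀ (M : ℝ), 1 ≤ M → ∀ (N : ℕ), (N:ℝ) ≤ M →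
    ∀ a : Fin N → ℂ, (∀ j, ‖a j‖ ≤ 1) → ∃ B : Set ℝ, volume B ≤ ENNReal.ofReal ε ∧
      ∀ t ∈ Icc (0:ℝ) 1, t ∉ B → (∀ j, 1 - a j * ee t ≠ 0) ∧
        ∑ j, (‖1 - a j * ee t‖ ^ 2)⁻¹ ≤ K * M ^ 2 ∧ ‖∑ j, (1 - a j * ee t)⁻¹‖ ≤ K * M := by
  obtain ⟨c, hc0, hc1, hc2⟩ : ∃ c : ℝ, 0 < c ∧ c ≤ ε / 12 ∧ c ≤ 1 / 2 :=
    ⟨min (ε/12) (1/2), by positivity, min_le_left _ _, min_le_right _ _⟩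
  set L : ℝ := 3 / (c * ε) with hL
  have hL0 : 0 < L := by positivity
  refine ⟨7 * L + 18 / ε, by positivity, ?_⟩
  intro M hM N hN a ha
  have hM0 : 0 < M := by linarith
  set η : ℝ := c / M with hη
  have hη0 : 0 < η := by positivity
  have hη1 : η ≤ 1 / 2 := by
    rw [hη, div_le_iff₀ hM0]; nlinarith
  have hηM : η * M = c := by rw [hη]; field_simp
  set b : Fin N → ℂ := fun j => (1 - η : ℝ) * a j with hb
  have hbn : ∀ j, ‖b j‖ ≤ 1 - η := by
    intro j
    rw [hb]
    simp only [norm_mul, Complex.norm_real]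
    rw [Real.norm_of_nonneg (by linarith)]
    exact mul_le_of_le_one_right (by linarith) (ha j)
  have hb1 : ∀ j, ‖b j‖ < 1 := fun j => by linarith [hbn j]
  set g : Fin N → ℝ → ℝ := fun j t => (‖1 - b j * ee t‖ ^ 2)⁻¹ with hg
  have hgnn : ∀ j t, 0 ≤ g j t := fun j t => by positivity
  have hgc : ∀ j, Continuous (g j) := by
    intro j
    have := continuous_ee
    apply Continuous.inv₀ (by fun_prop)
    intro t
    have : 1 - b j * ee t ≠ 0 := one_sub_ne (by rw [norm_mul, norm_ee, mul_one]; exact hb1 j)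
    simpa using this
  have hgi : ∀ j, ∫⁻ t in Icc (0:ℝ) 1, ENNReal.ofReal (g j t) ≤ ENNReal.ofReal (1/η) := by
    intro j
    refine (integral_poisson (hb1 j)).trans (ENNReal.ofReal_le_ofReal ?_)
    rw [one_div]
    exact inv_anti₀ hη0 (by linarith [hbn j])
  have hdiff : ∀ j t, ‖(1 - b j * ee t) - (1 - a j * ee t)‖ ≤ η := by
    intro j t
    have : (1 - b j * ee t) - (1 - a j * ee t) = (η:ℂ) * (a j * ee t) := by
      rw [hb]; push_cast; ring
    rw [this, norm_mul, norm_mul, norm_ee, mul_one, Complex.norm_real, Real.norm_of_nonneg hη0.le]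
    exact mul_le_of_le_one_right hη0.le (ha j)
  -- exceptional sets: some `1 - bⱼ w` is smaller than `2η`; the sum of inverse squares is large;
  -- the sum of inverses is large
  set B1 : Fin N → Set ℝ := fun j => {t | ENNReal.ofReal (1/(4*η^2)) ≤ ENNReal.ofReal (g j t)}
  set B2 : Set ℝ := {t | ENNReal.ofReal (L * M^2) ≤ ∑ j, ENNReal.ofReal (g j t)}
  set B3 : Set ℝ := {t ∈ Icc (0:ℝ) 1 | 3 * (6 * M / ε) ≤ ‖∑ j, (1 - b j * ee t)⁻¹‖}
  have hB1 : ∀ j, (volume.restrict (Icc (0:ℝ) 1)) (B1 j) ≤ ENNReal.ofReal (4 * η) := by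
    intro j
    have hm := mul_meas_ge_le_lintegral₀ (μ := volume.restrict (Icc (0:ℝ) 1))
      (f := fun t => ENNReal.ofReal (g j t)) (hgc j).measurable.ennreal_ofReal.aemeasurable
      (ENNReal.ofReal (1/(4*η^2)))
    calc _ = ENNReal.ofReal (4*η^2) * (ENNReal.ofReal (1/(4*η^2)) *
            (volume.restrict (Icc (0:ℝ) 1)) (B1 j)) := by
          rw [← mul_assoc, ← ENNReal.ofReal_mul (by positivity), mul_one_div_cancel (by positivity)]
          simp
      _ ≤ ENNReal.ofReal (4*η^2) * ENNReal.ofReal (1/η) := by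
          gcongr; exact hm.trans (hgi j)
      _ = _ := by
          rw [← ENNReal.ofReal_mul (by positivity)]; congr 1; field_simp
  have hB2 : (volume.restrict (Icc (0:ℝ) 1)) B2 ≤ ENNReal.ofReal (ε/3) := by
    have hm := mul_meas_ge_le_lintegral₀ (μ := volume.restrict (Icc (0:ℝ) 1))
      (f := fun t => ∑ j, ENNReal.ofReal (g j t))
      (Finset.measurable_sum _ fun j _ => (hgc j).measurable.ennreal_ofReal).aemeasurable
      (ENNReal.ofReal (L * M^2))
    rw [lintegral_finsetSum _ fun j _ => (hgc j).measurable.ennreal_ofReal] at hm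
    have hs : ∑ j, ∫⁻ t in Icc (0:ℝ) 1, ENNReal.ofReal (g j t) ≤ ENNReal.ofReal (M/η) := by
      calc _ ≤ ∑ j : Fin N, ENNReal.ofReal (1/η) := Finset.sum_le_sum fun j _ => hgi j
        _ = ENNReal.ofReal (N * (1/η)) := by
            rw [Finset.sum_const, Finset.card_univ, Fintype.card_fin, nsmul_eq_mul,
              ENNReal.ofReal_mul (by positivity)]
            simp
        _ ≤ _ := by
            apply ENNReal.ofReal_le_ofReal
            rw [mul_one_div]; gcongr
    calc _ = ENNReal.ofReal (1/(L*M^2)) * (ENNReal.ofReal (L*M^2) *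
            (volume.restrict (Icc (0:ℝ) 1)) B2) := by
          rw [← mul_assoc, ← ENNReal.ofReal_mul (by positivity), one_div_mul_cancel (by positivity)]
          simp
      _ ≤ ENNReal.ofReal (1/(L*M^2)) * ENNReal.ofReal (M/η) := by
          gcongr; exact hm.trans hs
      _ = _ := by
          rw [← ENNReal.ofReal_mul (by positivity)]; congr 1
          rw [hη, hL]; field_simp
  have hB3 : volume B3 ≤ ENNReal.ofReal (ε/3) := by
    refine (weak_H b hb1 (α := 6 * M / ε) (by positivity)).trans (ENNReal.ofReal_le_ofReal ?_)
    rw [div_le_div_iff₀ (by positivity) (by norm_num)]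
    have : ε * (6 * M / ε) = 6 * M := by field_simp
    rw [this]; linarith
  refine ⟨((⋃ j, B1 j) ∩ Icc 0 1) ∪ (B2 ∩ Icc 0 1) ∪ B3, ?_, ?_⟩
  · calc _ ≤ volume ((⋃ j, B1 j) ∩ Icc 0 1) + volume (B2 ∩ Icc 0 1) + volume B3 :=
          (measure_union_le _ _).trans (by gcongr; exact measure_union_le _ _)
      _ ≤ ENNReal.ofReal (ε/3) + ENNReal.ofReal (ε/3) + ENNReal.ofReal (ε/3) := by
          gcongr
          · calc _ ≤ _ := Measure.le_restrict_apply _ _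
              _ ≤ ∑ j, (volume.restrict (Icc (0:ℝ) 1)) (B1 j) := measure_iUnion_fintype_le _ _
              _ ≤ ∑ j : Fin N, ENNReal.ofReal (4*η) := Finset.sum_le_sum fun j _ => hB1 j
              _ = ENNReal.ofReal (N * (4*η)) := by
                  rw [Finset.sum_const, Finset.card_univ, Fintype.card_fin, nsmul_eq_mul,
                    ENNReal.ofReal_mul (by positivity)]
                  simp
              _ ≤ _ := by
                  apply ENNReal.ofReal_le_ofReal
                  nlinarith
          · exact (Measure.le_restrict_apply _ _).trans hB2
      _ = _ := by
          rw [← ENNReal.ofReal_add (by positivity) (by positivity),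
            ← ENNReal.ofReal_add (by positivity) (by positivity)]
          congr 1; ring
  · intro t ht hB
    simp only [mem_union, mem_inter_iff, ht, and_true, not_or, mem_iUnion, not_exists] at hB
    obtain ⟨⟨h1, h2⟩, h3⟩ := hB
    have hg1 : ∀ j, g j t < 1/(4*η^2) := by
      intro j
      have := h1 j
      simp only [B1, mem_ofPred_eq, not_le] at this
      exact (ENNReal.ofReal_lt_ofReal_iff (by positivity)).1 this
    have hg2 : ∑ j, g j t ≤ L * M^2 := by
      simp only [B2, mem_ofPred_eq, not_le] at h2
      rw [← ENNReal.ofReal_sum_of_nonneg fun j _ => hgnn j t] at h2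
      exact ((ENNReal.ofReal_lt_ofReal_iff (by positivity)).1 h2).le
    have hg3 : ‖∑ j, (1 - b j * ee t)⁻¹‖ ≤ 3 * (6 * M / ε) := by
      by_contra h
      exact h3 ⟨ht, (not_le.1 h).le⟩
    have hbne : ∀ j, 1 - b j * ee t ≠ 0 := fun j =>
      one_sub_ne (by rw [norm_mul, norm_ee, mul_one]; exact hb1 j)
    have hbb : ∀ j, 2 * η < ‖1 - b j * ee t‖ := by
      intro j
      have h := hg1 j
      have hp : 0 < ‖1 - b j * ee t‖ := norm_pos_iff.2 (hbne j)
      simp only [hg] at h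
      rw [inv_eq_one_div, div_lt_div_iff₀ (by positivity) (by positivity)] at h
      nlinarith
    have haa : ∀ j, ‖1 - b j * ee t‖ ≤ 2 * ‖1 - a j * ee t‖ := by
      intro j
      have h := norm_sub_norm_le (1 - b j * ee t) (1 - a j * ee t)
      have := hdiff j t
      have := hbb j
      linarith
    have hane : ∀ j, 0 < ‖1 - a j * ee t‖ := by
      intro j; linarith [hbb j, haa j]
    have hsa : ∀ j, (‖1 - a j * ee t‖ ^ 2)⁻¹ ≤ 4 * g j t := by
      intro j
      have hp : 0 < ‖1 - b j * ee t‖ := norm_pos_iff.2 (hbne j)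
      have := haa j
      simp only [hg]
      rw [inv_eq_one_div, ← div_eq_mul_inv, div_le_div_iff₀ (by have := hane j; positivity) (by positivity)]
      nlinarith
    have hS2 : ∑ j, (‖1 - a j * ee t‖ ^ 2)⁻¹ ≤ 4 * (L * M^2) := by
      calc _ ≤ ∑ j, 4 * g j t := Finset.sum_le_sum fun j _ => hsa j
        _ = 4 * ∑ j, g j t := by rw [Finset.mul_sum]
        _ ≤ _ := by gcongr
    refine ⟨fun j => norm_pos_iff.1 (hane j), hS2.trans ?_, ?_⟩
    · have : 0 < 18 / ε := by positivity
      nlinarith [sq_nonneg M]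
    · have hterm : ∀ j, ‖(1 - a j * ee t)⁻¹ - (1 - b j * ee t)⁻¹‖ ≤
          η * (((‖1 - a j * ee t‖ ^ 2)⁻¹ + g j t) / 2) := by
        intro j
        have hpa := hane j
        rw [inv_sub_inv (norm_pos_iff.1 (hane j)) (hbne j), norm_div, norm_mul,
          div_eq_mul_inv, mul_inv]
        apply mul_le_mul (hdiff j t) _ (by positivity) hη0.le
        simp only [hg]
        rw [← inv_pow, ← inv_pow]
        nlinarith [sq_nonneg (‖1 - a j * ee t‖⁻¹ - ‖1 - b j * ee t‖⁻¹)]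
      have hD : ‖∑ j, (1 - a j * ee t)⁻¹ - ∑ j, (1 - b j * ee t)⁻¹‖ ≤ η * ((5 * (L * M^2)) / 2) := by
        rw [← Finset.sum_sub_distrib]
        calc _ ≤ ∑ j, ‖(1 - a j * ee t)⁻¹ - (1 - b j * ee t)⁻¹‖ := norm_sum_le _ _
          _ ≤ ∑ j, η * (((‖1 - a j * ee t‖ ^ 2)⁻¹ + g j t) / 2) := Finset.sum_le_sum fun j _ => hterm j
          _ = η * ((∑ j, (‖1 - a j * ee t‖ ^ 2)⁻¹ + ∑ j, g j t) / 2) := by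
              rw [← Finset.mul_sum, ← Finset.sum_div, Finset.sum_add_distrib]
          _ ≤ _ := by gcongr; linarith
      have hD2 : η * ((5 * (L * M^2)) / 2) = c * (5 * (L * M) / 2) := by rw [← hηM]; ring
      have := norm_le_norm_add_norm_sub' (∑ j, (1 - a j * ee t)⁻¹) (∑ j, (1 - b j * ee t)⁻¹)
      have h5 : c * (5 * (L * M) / 2) ≤ 1/2 * (5 * (L * M) / 2) := by gcongr
      have h6 : 3 * (6 * M / ε) = 18/ε * M := by ring
      have : 0 < L * M := by positivity
      linarith

lemma norm_one_add_le (z : ℂ) : ‖1 + z‖ ≤ Real.exp (‖z‖ ^ 2 / 2 + z.re) := by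
  have h : ‖1 + z‖ ^ 2 ≤ (Real.exp (‖z‖ ^ 2 / 2 + z.re)) ^ 2 := by
    rw [← Real.exp_nat_mul, ← Complex.normSq_eq_norm_sq, Complex.normSq_apply]
    have h1 := Real.add_one_le_exp ((2:ℕ) * (‖z‖ ^ 2 / 2 + z.re))
    have h2 : ‖z‖^2 = z.re * z.re + z.im * z.im := by
      rw [← Complex.normSq_eq_norm_sq, Complex.normSq_apply]
    push_cast at h1 ⊢
    simp only [Complex.add_re, Complex.one_re, Complex.add_im, Complex.one_im]
    nlinarith
  exact le_of_sq_le_sq h (Real.exp_pos _).le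

/-- On the unit circle `|w - ζ| = |1 - conj ζ · w|` for `|ζ| ≤ 1`, and `|w - ζ| = |ζ| |1 - ζ⁻¹ w|`
otherwise. -/
lemma exists_factor_multiset (s : Multiset ℂ) : ∃ (a : Fin (Multiset.card s) → ℂ) (c : ℝ), (∀ j, ‖a j‖ ≤ 1) ∧
    ∀ w : ℂ, ‖w‖ = 1 → (s.map fun ζ => ‖w - ζ‖).prod = c * ∏ j, ‖1 - a j * w‖ := by
  induction s using Multiset.induction_on with
  | empty => exact ⟨fun _ => 0, 1, by simp, by simp⟩
  | cons ζ s ih =>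
    obtain ⟨a, c, ha, h⟩ := ih
    obtain ⟨a0, c0, ha0, h0⟩ : ∃ (a0 : ℂ) (c0 : ℝ), ‖a0‖ ≤ 1 ∧ ∀ w : ℂ, ‖w‖ = 1 →
        ‖w - ζ‖ = c0 * ‖1 - a0 * w‖ := by
      by_cases hζ : ‖ζ‖ ≤ 1
      · refine ⟨(starRingEnd ℂ) ζ, 1, by simpa using hζ, fun w hw => ?_⟩
        have h1 : w * (starRingEnd ℂ) w = 1 := by
          rw [Complex.mul_conj, Complex.normSq_eq_norm_sq, hw]; simp
        have h2 : w - ζ = w * (starRingEnd ℂ) (1 - (starRingEnd ℂ) ζ * w) := by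
          simp only [map_sub, map_one, map_mul, Complex.conj_conj]
          linear_combination ζ * h1
        rw [h2, norm_mul, hw, RCLike.norm_conj]
      · have hζ0 : ζ ≠ 0 := by rintro rfl; simp at hζ
        refine ⟨ζ⁻¹, ‖ζ‖, ?_, fun w hw => ?_⟩
        · rw [norm_inv]; exact inv_le_one_of_one_le₀ (not_le.1 hζ).le
        · rw [← norm_mul, ← norm_neg]; congr 1; field_simp; ring
    let a' : Fin (Multiset.card s + 1) → ℂ := Fin.cons a0 a
    have key : (∀ j, ‖a' j‖ ≤ 1) ∧
      ∀ w : ℂ, ‖w‖ = 1 → ((ζ ::ₘ s).map fun ζ => ‖w - ζ‖).prod = (c0 * c) * ∏ j, ‖1 - a' j * w‖ := by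
      refine ⟨fun j => ?_, fun w hw => ?_⟩
      · refine Fin.cases ?_ (fun i => ?_) j
        · exact ha0
        · exact ha i
      · rw [Multiset.map_cons, Multiset.prod_cons, h w hw, h0 w hw, Fin.prod_univ_succ]
        simp only [a', Fin.cons_zero, Fin.cons_succ]
        ring
    rw [Multiset.card_cons]
    exact ⟨a', c0 * c, key⟩

/-- Roots inside the unit disc are reflected, so on the unit circle `|p|` is a product of factors
`|1 - aⱼ w|` with `|aⱼ| ≤ 1`. -/
lemma exists_factor (p : Polynomial ℂ) : ∃ (N : ℕ) (a : Fin N → ℂ) (c : ℝ), N ≤ p.natDegree ∧ (∀ j, ‖a j‖ ≤ 1) ∧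
    ∀ w : ℂ, ‖w‖ = 1 → ‖p.eval w‖ = c * ∏ j, ‖1 - a j * w‖ := by
  obtain ⟨a, c, ha, h⟩ := exists_factor_multiset p.roots
  refine ⟨_, a, ‖p.leadingCoeff‖ * c, p.card_roots', ha, fun w hw => ?_⟩
  have hs := (IsAlgClosed.splits p).eval_eq_prod_roots w
  rw [hs, norm_mul, mul_assoc, ← h w hw]
  congr 1
  exact (map_multiset_prod (normHom : ℂ →*₀ ℝ) _).trans (by simp [Multiset.map_map, normHom])

/-- Off a set of measure `ε`, the modulus of a polynomial of degree at most `M` on the unit circle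
grows at most by a constant factor under rotation by `O(1/M)`. -/
lemma doubling (ε C₀ : ℝ) (hε : 0 < ε) (hC : 0 ≤ C₀) : ∃ A : ℝ, 0 < A ∧ ∀ (M : ℝ), 1 ≤ M → ∀ s : ℝ, 0 ≤ s →
    s * M ≤ C₀ → ∀ p : Polynomial ℂ, (p.natDegree : ℝ) ≤ M →
      volume {t ∈ Icc (0:ℝ) 1 | ∃ h, |h| ≤ s ∧ A * ‖p.eval (ee t)‖ < ‖p.eval (ee (t + h))‖} ≤
        ENNReal.ofReal ε := by
  obtain ⟨K, hK, hweak⟩ := weak_type ε hε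
  set C := 2 * π * C₀ with hCdef
  have hCnn : 0 ≤ C := by positivity
  refine ⟨Real.exp (C ^ 2 * K / 2 + C * (K + 1)), Real.exp_pos _, ?_⟩
  intro M hM s hs hsM p hp
  obtain ⟨N, a, c, hN, ha, hfac⟩ := exists_factor p
  have hNM : (N:ℝ) ≤ M := le_trans (by exact_mod_cast hN) hp
  obtain ⟨B, hB, hgood⟩ := hweak M hM N hNM a ha
  refine le_trans (measure_mono ?_) hB
  rintro t ⟨ht, h, hh, hlt⟩
  by_contra htB
  obtain ⟨hne, hS2, hS⟩ := hgood t ht htB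
  apply absurd hlt
  rw [not_lt, hfac _ (norm_ee _), hfac _ (norm_ee _)]
  have hc : 0 ≤ c := by
    by_contra hcn
    have h1 := hfac _ (norm_ee t)
    have h2 : 0 < ∏ j, ‖1 - a j * ee t‖ := Finset.prod_pos fun j _ => norm_pos_iff.2 (hne j)
    have := norm_nonneg (p.eval (ee t))
    nlinarith
  set w := ee t
  set δ := ee h - 1 with hδ
  have hw : ee (t + h) = w * (1 + δ) := by rw [ee_add, hδ]; ring
  have hδn : ‖δ‖ * M ≤ C := by
    calc _ ≤ (2 * π * |h|) * M := by gcongr; exact norm_ee_sub_one_le h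
      _ ≤ (2 * π * s) * M := by gcongr
      _ = 2 * π * (s * M) := by ring
      _ ≤ _ := by rw [hCdef]; gcongr
  have hw1 : ‖w‖ = 1 := norm_ee t
  -- rotating `w` to `w (1 + δ)` multiplies `1 - aⱼ w` by `1 + z j`
  set z : Fin N → ℂ := fun j => -δ * ((1 - a j * w)⁻¹ - 1) with hz
  have hfacj : ∀ j, ‖1 - a j * ee (t + h)‖ = ‖1 - a j * w‖ * ‖1 + z j‖ := by
    intro j
    rw [← norm_mul, hw]; congr 1
    have := hne j
    simp only [hz]
    field_simp
    ring
  have hzsq : ∀ j, ‖z j‖ ^ 2 ≤ ‖δ‖ ^ 2 * (‖1 - a j * w‖ ^ 2)⁻¹ := by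
    intro j
    have h1 : z j = -δ * (a j * w * (1 - a j * w)⁻¹) := by
      have := hne j
      simp only [hz]; congr 1; field_simp; ring
    rw [h1, norm_mul, norm_neg, mul_pow, norm_mul, norm_inv, mul_pow, ← inv_pow]
    have : ‖a j * w‖ ^ 2 ≤ 1 := by
      rw [norm_mul, hw1, mul_one]
      exact pow_le_one₀ (norm_nonneg _) (ha j)
    gcongr
    exact mul_le_of_le_one_left (by positivity) this
  have hprod : ∏ j, ‖1 + z j‖ ≤ Real.exp (C ^ 2 * K / 2 + C * (K + 1)) := by
    calc _ ≤ ∏ j, Real.exp (‖z j‖ ^ 2 / 2 + (z j).re) :=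
          Finset.prod_le_prod (fun j _ => norm_nonneg _) fun j _ => norm_one_add_le _
      _ = Real.exp (∑ j, (‖z j‖ ^ 2 / 2 + (z j).re)) := (Real.exp_sum _ _).symm
      _ ≤ _ := by
        apply Real.exp_le_exp.2
        rw [Finset.sum_add_distrib]
        apply add_le_add
        · rw [← Finset.sum_div]
          gcongr
          calc ∑ j, ‖z j‖ ^ 2 ≤ ∑ j, ‖δ‖ ^ 2 * (‖1 - a j * w‖ ^ 2)⁻¹ :=
                Finset.sum_le_sum fun j _ => hzsq j
            _ = ‖δ‖ ^ 2 * ∑ j, (‖1 - a j * w‖ ^ 2)⁻¹ := by rw [Finset.mul_sum]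
            _ ≤ ‖δ‖ ^ 2 * (K * M ^ 2) := by gcongr
            _ = (‖δ‖ * M) ^ 2 * K := by ring
            _ ≤ _ := by gcongr
        · rw [← Complex.re_sum]
          refine (Complex.re_le_norm _).trans ?_
          have : ∑ j, z j = -δ * (∑ j, (1 - a j * w)⁻¹ - N) := by
            simp only [hz]
            rw [← Finset.mul_sum, Finset.sum_sub_distrib]
            simp
          rw [this, norm_mul, norm_neg]
          calc _ ≤ ‖δ‖ * (K * M + M) := by
                gcongr
                refine (norm_sub_le _ _).trans ?_
                apply add_le_add hS
                simpa using hNM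
            _ = (‖δ‖ * M) * (K + 1) := by ring
            _ ≤ _ := by gcongr
  simp_rw [hfacj]
  rw [Finset.prod_mul_distrib]
  have h2 : 0 ≤ ∏ j, ‖1 - a j * w‖ := by positivity
  calc _ = (c * ∏ j, ‖1 - a j * w‖) * ∏ j, ‖1 + z j‖ := by ring
    _ ≤ (c * ∏ j, ‖1 - a j * w‖) * Real.exp (C ^ 2 * K / 2 + C * (K + 1)) := by gcongr
    _ = _ := by ring

/-! ### Trigonometric polynomials and doubling in several variables -/

/-- `TrigPoly D f`: the real function `f` on `ℝⁿ` is a finite trigonometric sum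
`Σ_j c_j e(k_j · x)` whose frequencies satisfy `|k_j i| ≤ D` in each coordinate. -/
def TrigPoly {n : ℕ} (D : ℕ) (f : (Fin n → ℝ) → ℝ) : Prop :=
  ∃ (N : ℕ) (k : Fin N → Fin n → ℤ) (c : Fin N → ℂ), (∀ j i, |k j i| ≤ (D : ℤ)) ∧
    ∀ x, (f x : ℂ) = ∑ j, c j * ∏ i, ee (k j i * x i)

lemma TrigPoly.continuous {n D : ℕ} {f : (Fin n → ℝ) → ℝ} (hf : TrigPoly D f) : Continuous f := by
  obtain ⟨N, k, c, -, h⟩ := hf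
  have h1 : f = fun x => (∑ j, c j * ∏ i, ee (k j i * x i)).re := by
    funext x; rw [← h x, Complex.ofReal_re]
  rw [h1]
  refine Complex.continuous_re.comp (continuous_finsetSum _ fun j _ => ?_)
  refine continuous_const.mul (continuous_finsetProd _ fun i _ => ?_)
  exact continuous_ee.comp (by fun_prop)

lemma ee_zero : ee 0 = 1 := by simp [ee]

lemma ee_natCast_mul (m : ℕ) (t : ℝ) : ee (m * t) = ee t ^ m := by
  unfold ee
  rw [← Complex.exp_nat_mul]; congr 1; push_cast; ring

/-- On each coordinate line a trigonometric polynomial has the absolute value of an algebraic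
polynomial on the unit circle. -/
lemma TrigPoly.exists_poly {n D : ℕ} {f : (Fin n → ℝ) → ℝ} (hf : TrigPoly D f)
    (x : Fin n → ℝ) (i : Fin n) : ∃ p : Polynomial ℂ, p.natDegree ≤ 2 * D ∧
      ∀ t, |f (Function.update x i t)| = ‖p.eval (ee t)‖ := by
  obtain ⟨N, k, c, hk, h⟩ := hf
  refine ⟨∑ j, Polynomial.C (c j * ∏ l ∈ Finset.univ.erase i, ee (k j l * x l)) *
    Polynomial.X ^ (k j i + D).toNat, ?_, fun t => ?_⟩
  · refine Polynomial.natDegree_sum_le_of_forall_le _ _ fun j _ => ?_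
    refine (Polynomial.natDegree_C_mul_X_pow_le _ _).trans ?_
    have := abs_le.1 (hk j i)
    omega
  · have h1 : ‖(f (Function.update x i t) : ℂ) * ee (D * t)‖ = |f (Function.update x i t)| := by
      rw [norm_mul, norm_ee, mul_one, Complex.norm_real, Real.norm_eq_abs]
    rw [← h1, h, Finset.sum_mul, Polynomial.eval_finsetSum]
    congr 1
    refine Finset.sum_congr rfl fun j _ => ?_
    rw [Polynomial.eval_mul, Polynomial.eval_C, Polynomial.eval_pow, Polynomial.eval_X,
      ← Finset.mul_prod_erase _ _ (Finset.mem_univ i), Function.update_self,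
      ← ee_natCast_mul]
    have h2 : (((k j i + D).toNat : ℕ) : ℝ) = k j i + D := by
      have := abs_le.1 (hk j i)
      have h3 : (((k j i + D).toNat : ℕ) : ℤ) = k j i + D := Int.toNat_of_nonneg (by omega)
      exact_mod_cast h3
    rw [h2, add_mul, ee_add]
    have h3 : ∏ l ∈ Finset.univ.erase i, ee (k j l * Function.update x i t l) =
        ∏ l ∈ Finset.univ.erase i, ee (k j l * x l) := by
      refine Finset.prod_congr rfl fun l hl => ?_
      rw [Function.update_of_ne (Finset.ne_of_mem_erase hl)]
    rw [h3]; ring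

/-- Integrating translates in one coordinate direction keeps the frequencies. -/
lemma TrigPoly.integral {n D : ℕ} {f : (Fin n → ℝ) → ℝ} (hf : TrigPoly D f) (i : Fin n) (a b : ℝ) :
    TrigPoly D (fun x => ∫ h in a..b, f (x + Pi.single i h)) := by
  obtain ⟨N, k, c, hk, hx⟩ := hf
  refine ⟨N, k, fun j => c j * ∫ h in a..b, ee (k j i * h), hk, fun x => ?_⟩
  have h1 : ∀ h : ℝ, (f (x + Pi.single i h) : ℂ) =
      ∑ j, (c j * ∏ l, ee (k j l * x l)) * ee (k j i * h) := by
    intro h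
    rw [hx]
    refine Finset.sum_congr rfl fun j _ => ?_
    rw [mul_assoc]; congr 1
    have : ∀ l, ee (k j l * (x + Pi.single i h : Fin n → ℝ) l) =
        ee (k j l * x l) * (if l = i then ee (k j i * h) else 1) := by
      intro l
      rw [Pi.add_apply, mul_add, ee_add]
      by_cases hl : l = i
      · subst hl; simp
      · simp [hl, ee_zero]
    simp_rw [this]
    rw [Finset.prod_mul_distrib]
    simp
  rw [← intervalIntegral.integral_ofReal]
  simp_rw [h1]
  rw [intervalIntegral.integral_finsetSum]
  · refine Finset.sum_congr rfl fun j _ => ?_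
    rw [intervalIntegral.integral_const_mul]; ring
  · intro j _
    exact (continuous_const.mul (continuous_ee.comp (by fun_prop))).intervalIntegrable _ _

lemma TrigPoly.sq {n D : ℕ} {f : (Fin n → ℝ) → ℝ} (hf : TrigPoly D f) :
    TrigPoly (2 * D) (fun x => f x ^ 2) := by
  obtain ⟨N, k, c, hk, hx⟩ := hf
  let e := (finProdFinEquiv : Fin N × Fin N ≃ Fin (N * N)).symm
  refine ⟨N * N, fun j i => k (e j).1 i + k (e j).2 i, fun j => c (e j).1 * c (e j).2,
    fun j i => ?_, fun x => ?_⟩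
  · have := abs_add_le (k (e j).1 i) (k (e j).2 i)
    have := hk (e j).1 i
    have := hk (e j).2 i
    push_cast; omega
  · rw [Complex.ofReal_pow, hx, _root_.sq, Finset.sum_mul_sum, ← Fintype.sum_prod_type',
      ← Equiv.sum_comp e]
    refine Finset.sum_congr rfl fun j _ => ?_
    have : ∀ i, ee (((k (e j).1 i + k (e j).2 i : ℤ) : ℝ) * x i) =
        ee (k (e j).1 i * x i) * ee (k (e j).2 i * x i) := by
      intro i; rw [← ee_add]; congr 1; push_cast; ring
    simp_rw [this]
    rw [Finset.prod_mul_distrib]; ring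

/-- The half-open unit cube in `Fin n → ℝ`. -/
def ucube (n : ℕ) : Set (Fin n → ℝ) := Set.pi univ fun _ => Ico (0:ℝ) 1

lemma measurableSet_ucube (n : ℕ) : MeasurableSet (ucube n) :=
  MeasurableSet.univ_pi fun _ => measurableSet_Ico

/-- A subset of the unit cube all of whose slices in one coordinate direction are small is
small. -/
lemma volume_le_of_slices {n : ℕ} {E : Set (Fin n → ℝ)} (hE : MeasurableSet E)
    (hEQ : E ⊆ ucube n) (i : Fin n) (ε : ENNReal)
    (h : ∀ x : Fin n → ℝ, volume {t | t ∈ Ico (0:ℝ) 1 ∧ Function.update x i t ∈ E} ≤ ε) :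
    volume E ≤ ε := by
  have hp : IsProbabilityMeasure (volume.restrict (Ico (0:ℝ) 1)) := ⟨by simp⟩
  have h1 : volume E = ∫⁻ x, E.indicator 1 x
      ∂(Measure.pi fun _ : Fin n => volume.restrict (Ico (0:ℝ) 1)) := by
    rw [lintegral_indicator_one hE]
    have h2 : (Measure.pi fun _ : Fin n => volume.restrict (Ico (0:ℝ) 1)) =
        volume.restrict (ucube n) := by
      rw [ucube, volume_pi, Measure.restrict_pi_pi]
    rw [h2, Measure.restrict_apply hE, inter_eq_left.2 hEQ]
  have h3 : ∫⁻ x, (fun _ => ε) x ∂(Measure.pi fun _ : Fin n => volume.restrict (Ico (0:ℝ) 1)) = ε := by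
    simp
  rw [h1, ← h3]
  refine lintegral_le_of_lmarginal_le {i} (measurable_one.indicator hE) measurable_const ?_
  intro x
  rw [lmarginal_singleton, lmarginal_singleton]
  have h4 : ∀ t, E.indicator (1 : (Fin n → ℝ) → ENNReal) (Function.update x i t) =
      {t | Function.update x i t ∈ E}.indicator 1 t := fun t => rfl
  have h5 : MeasurableSet {t | Function.update x i t ∈ E} := measurable_update x hE
  simp only [h4]
  rw [lintegral_indicator_one h5, Measure.restrict_apply h5]
  simp only [lintegral_const, measure_univ, mul_one]
  refine le_trans (measure_mono ?_) (h x)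
  rintro t ⟨ht1, ht2⟩
  exact ⟨ht2, ht1⟩

/-- The average (unnormalised) of `g` over the translates by vectors of `[-s,s]^T`. -/
def avg {n : ℕ} (s : ℝ) (g : (Fin n → ℝ) → ℝ) (T : Finset (Fin n)) (x : Fin n → ℝ) : ENNReal :=
  lmarginal (fun _ => volume.restrict (Icc (-s) s)) T (fun h => ENNReal.ofReal (g (x + h))) 0

lemma avg_insert {n : ℕ} (s : ℝ) {g : (Fin n → ℝ) → ℝ} (hg : Continuous g) {T : Finset (Fin n)}
    {i : Fin n} (hi : i ∉ T) (x : Fin n → ℝ) :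
    avg s g (insert i T) x = ∫⁻ h in Icc (-s) s, avg s g T (x + Pi.single i h) := by
  unfold avg
  rw [lmarginal_insert _ (by fun_prop) hi]
  refine lintegral_congr fun h => ?_
  unfold lmarginal
  refine lintegral_congr fun y => ?_
  show ENNReal.ofReal (g _) = ENNReal.ofReal (g _)
  congr 2
  funext l
  simp only [Pi.add_apply, Function.updateFinset_def]
  by_cases hl : l ∈ T
  · have : l ≠ i := fun h => hi (h ▸ hl)
    simp [hl, this]
  · by_cases hli : l = i
    · subst hli; simp [hl]
    · simp [hl, hli]

/-- One-dimensional doubling on the lines in direction `i`, integrated over the lines. -/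
lemma doubling_step {n D : ℕ} {ε A M s : ℝ}
    (hdoub : ∀ p : Polynomial ℂ, (p.natDegree : ℝ) ≤ M →
      volume {t ∈ Icc (0:ℝ) 1 | ∃ h, |h| ≤ s ∧ A * ‖p.eval (ee t)‖ < ‖p.eval (ee (t + h))‖} ≤
        ENNReal.ofReal ε) (hs : 0 ≤ s) (hD : 2 * (D:ℝ) ≤ M)
    {f : (Fin n → ℝ) → ℝ} (hf : TrigPoly D f) (hf0 : ∀ x, 0 ≤ f x) (i : Fin n) :
    volume {x ∈ ucube n | 2 * s * A * f x < ∫ h in (-s)..s, f (x + Pi.single i h)} ≤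
      ENNReal.ofReal ε := by
  have hfc := hf.continuous
  have hic := (hf.integral i (-s) s).continuous
  refine volume_le_of_slices ?_ (fun x hx => hx.1) i _ fun x => ?_
  · exact (measurableSet_ucube n).inter
      (isOpen_lt (continuous_const.mul hfc) hic).measurableSet
  obtain ⟨p, hp, hpe⟩ := hf.exists_poly x i
  refine le_trans (measure_mono ?_) (hdoub p (le_trans (by exact_mod_cast hp) hD))
  rintro t ⟨ht, -, hlt⟩
  refine ⟨⟨ht.1, ht.2.le⟩, ?_⟩
  by_contra hcon
  push Not at hcon
  refine absurd hlt (not_lt.2 ?_)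
  have hup : ∀ h, Function.update x i t + Pi.single i h = Function.update x i (t + h) := by
    intro h; funext l
    by_cases hl : l = i
    · subst hl; simp
    · simp [hl]
  have hb : ∀ h ∈ Icc (-s) s, f (Function.update x i t + Pi.single i h) ≤
      A * f (Function.update x i t) := by
    intro h hh
    have := hcon h (abs_le.2 hh)
    rw [← hpe, ← hpe, abs_of_nonneg (hf0 _), abs_of_nonneg (hf0 _)] at this
    rwa [hup]
  have hle : -s ≤ s := by linarith
  calc ∫ h in (-s)..s, f (Function.update x i t + Pi.single i h)
      ≤ ∫ h in (-s)..s, A * f (Function.update x i t) := by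
        refine intervalIntegral.integral_mono_on hle ?_ (by simp) hb
        refine Continuous.intervalIntegrable (hfc.comp (continuous_const.add ?_)) _ _
        exact continuous_single (A := fun _ : Fin n => ℝ) i
    _ = _ := by rw [intervalIntegral.integral_const]; simp; ring

/-- Doubling for nonnegative trigonometric polynomials on `ℝⁿ`, by applying `doubling_step` to the
successive averages in the coordinates of a growing set; each coordinate costs measure `ε`. -/
lemma doubling_n (n : ℕ) (ε C₀ : ℝ) (hε : 0 < ε) (hC : 0 ≤ C₀) : ∃ A : ℝ, 0 < A ∧
    ∀ (M s : ℝ) (D : ℕ), 1 ≤ M → 0 ≤ s → s * M ≤ C₀ → 2 * (D:ℝ) ≤ M →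
      ∀ g : (Fin n → ℝ) → ℝ, TrigPoly D g → (∀ x, 0 ≤ g x) →
      volume {x ∈ ucube n | ENNReal.ofReal ((2 * s * A) ^ n * g x) <
        ∫⁻ h in Set.pi univ fun _ => Icc (-s) s, ENNReal.ofReal (g (x + h))} ≤
          ENNReal.ofReal (n * ε) := by
  obtain ⟨A, hA, hdoub⟩ := doubling ε C₀ hε hC
  refine ⟨A, hA, fun M s D hM hs hsM hD g hg hg0 => ?_⟩
  have key : ∀ T : Finset (Fin n), ∃ f : (Fin n → ℝ) → ℝ, TrigPoly D f ∧ (∀ x, 0 ≤ f x) ∧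
      (∀ x, avg s g T x = ENNReal.ofReal (f x)) ∧
      volume {x ∈ ucube n | (2 * s * A) ^ T.card * g x < f x} ≤ ENNReal.ofReal (T.card * ε) := by
    intro T
    induction T using Finset.induction with
    | empty =>
      refine ⟨g, hg, hg0, fun x => by simp [avg], ?_⟩
      simp
    | insert i T hi ih =>
      obtain ⟨f, hf, hf0, hav, hvol⟩ := ih
      have hfc := hf.continuous
      have hle : -s ≤ s := by linarith
      refine ⟨fun x => ∫ h in (-s)..s, f (x + Pi.single i h), hf.integral i _ _, fun x => ?_,
        fun x => ?_, ?_⟩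
      · exact intervalIntegral.integral_nonneg hle fun h _ => hf0 _
      · rw [avg_insert s hg.continuous hi]
        simp_rw [hav]
        rw [intervalIntegral.integral_of_le hle, ← integral_Icc_eq_integral_Ioc,
          ofReal_integral_eq_lintegral_ofReal]
        · refine Continuous.integrableOn_Icc (hfc.comp (continuous_const.add ?_))
          exact continuous_single (A := fun _ : Fin n => ℝ) i
        · exact Filter.Eventually.of_forall fun h => hf0 _
      · rw [Finset.card_insert_of_notMem hi]
        have hstep := doubling_step (n := n) (hdoub M hM s hs hsM) hs hD hf hf0 i
        calc _ ≤ volume ({x ∈ ucube n | 2 * s * A * f x < ∫ h in (-s)..s, f (x + Pi.single i h)} ∪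
              {x ∈ ucube n | (2 * s * A) ^ T.card * g x < f x}) := by
              refine measure_mono ?_
              rintro x ⟨hx, hlt⟩
              by_contra hcon
              simp only [mem_union, mem_ofPred_eq, not_or, not_and, not_lt] at hcon
              have h1 := hcon.1 hx
              have h2 := hcon.2 hx
              have h3 : 2 * s * A * f x ≤ 2 * s * A * ((2 * s * A) ^ T.card * g x) :=
                mul_le_mul_of_nonneg_left h2 (by positivity)
              have h4 : (2 * s * A) ^ (T.card + 1) * g x =
                2 * s * A * ((2 * s * A) ^ T.card * g x) := by ring
              linarith
          _ ≤ _ := measure_union_le _ _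
          _ ≤ ENNReal.ofReal ε + ENNReal.ofReal (T.card * ε) := add_le_add hstep hvol
          _ = _ := by
              rw [← ENNReal.ofReal_add hε.le (by positivity)]
              congr 1; push_cast; ring
  obtain ⟨f, hf, hf0, hav, hvol⟩ := key Finset.univ
  simp only [Finset.card_univ, Fintype.card_fin] at hvol
  refine le_trans (measure_mono ?_) hvol
  rintro x ⟨hx, hlt⟩
  refine ⟨hx, ?_⟩
  have h1 : avg s g Finset.univ x =
      ∫⁻ h in Set.pi univ fun _ => Icc (-s) s, ENNReal.ofReal (g (x + h)) := by
    unfold avg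
    rw [lmarginal_univ, volume_pi, Measure.restrict_pi_pi]
  rw [← h1, hav] at hlt
  exact (ENNReal.ofReal_lt_ofReal_iff_of_nonneg (mul_nonneg (by positivity) (hg0 _))).1 hlt

/-! ### Green's identity on boxes -/

/-- The `i`-th partial derivative of a function on `Fin n → ℝ`. -/
def pd {n : ℕ} {E : Type*} [NormedAddCommGroup E] [NormedSpace ℝ E] (i : Fin n)
    (u : (Fin n → ℝ) → E) (x : Fin n → ℝ) : E := fderiv ℝ u x (Pi.single i 1)

/-- The Laplacian in the coordinates of `Fin n → ℝ`. -/
def lapP {n : ℕ} {E : Type*} [NormedAddCommGroup E] [NormedSpace ℝ E]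
    (u : (Fin n → ℝ) → E) (x : Fin n → ℝ) : E := ∑ i, pd i (pd i u) x

section Green

variable {E : Type*} [NormedCommRing E] [NormedAlgebra ℝ E]

lemma contDiff_pd {n : ℕ} {u : (Fin n → ℝ) → E} (hu : ContDiff ℝ (⊤ : ℕ∞) u) (i : Fin n) :
    ContDiff ℝ (⊤ : ℕ∞) (pd i u) :=
  (hu.fderiv_right (m := (⊤ : ℕ∞)) (by simp)).clm_apply contDiff_const

/-- Green's identity `∫ (Δu · v - u · Δv) = 0` on a box, when the boundary terms on opposite faces
cancel. -/
lemma green {k : ℕ} {u v : (Fin (k + 1) → ℝ) → E} (hu : ContDiff ℝ (⊤ : ℕ∞) u)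
    (hv : ContDiff ℝ (⊤ : ℕ∞) v) {a b : Fin (k + 1) → ℝ} (hab : a ≤ b)
    (hface : ∀ (i : Fin (k + 1)) (y : Fin k → ℝ),
      pd i u (i.insertNth (b i) y) * v (i.insertNth (b i) y) -
        u (i.insertNth (b i) y) * pd i v (i.insertNth (b i) y) =
      pd i u (i.insertNth (a i) y) * v (i.insertNth (a i) y) -
        u (i.insertNth (a i) y) * pd i v (i.insertNth (a i) y)) :
    ∫ x in Icc a b, (lapP u x * v x - u x * lapP v x) = 0 := by
  have hV : ∀ i : Fin (k + 1), ContDiff ℝ (⊤ : ℕ∞) (fun x => pd i u x * v x - u x * pd i v x) :=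
    fun i => ((contDiff_pd hu i).mul hv).sub (hu.mul (contDiff_pd hv i))
  have hd : ∀ {w : (Fin (k + 1) → ℝ) → E}, ContDiff ℝ (⊤ : ℕ∞) w → ∀ x, DifferentiableAt ℝ w x :=
    fun h x => (h.differentiable (by simp)) x
  have hdiv : ∀ x, (∑ i, fderiv ℝ (fun x => pd i u x * v x - u x * pd i v x) x (Pi.single i 1)) =
      lapP u x * v x - u x * lapP v x := by
    intro x
    unfold lapP
    rw [Finset.sum_mul, Finset.mul_sum, ← Finset.sum_sub_distrib]
    refine Finset.sum_congr rfl fun i _ => ?_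
    have h1 := (((hd (contDiff_pd hu i) x).hasFDerivAt.mul (hd hv x).hasFDerivAt).sub
      ((hd hu x).hasFDerivAt.mul (hd (contDiff_pd hv i) x).hasFDerivAt)).fderiv
    have h2 : fderiv ℝ (fun x => pd i u x * v x - u x * pd i v x) x = _ := h1
    rw [h2]
    simp only [pd, sub_apply, add_apply,
      smul_apply, smul_eq_mul]
    ring
  have hcont : Continuous (fun x => ∑ i, fderiv ℝ
      (fun x => pd i u x * v x - u x * pd i v x) x (Pi.single i 1)) := by
    refine continuous_finsetSum _ fun i _ => ?_
    exact (((hV i).continuous_fderiv (by simp)).clm_apply continuous_const)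
  have := integral_divergence_of_hasFDerivAt_off_countable' a b hab
    (fun i x => pd i u x * v x - u x * pd i v x)
    (fun i x => fderiv ℝ (fun x => pd i u x * v x - u x * pd i v x) x) ∅ countable_empty
    (fun i => (hV i).continuous.continuousOn) (fun x _ i => (hd (hV i) x).hasFDerivAt)
    (hcont.continuousOn.integrableOn_compact isCompact_Icc)
  simp only [hdiv] at this
  rw [this]
  refine Finset.sum_eq_zero fun i _ => ?_
  simp only [hface, sub_self]

/-- The product function `x ↦ ∏ⱼ wⱼ(xⱼ)`. -/
def prodFun {n : ℕ} (w : Fin n → ℝ → E) (x : Fin n → ℝ) : E := ∏ j, w j (x j)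

lemma contDiff_prodFun {n : ℕ} {w : Fin n → ℝ → E} (hw : ∀ j, ContDiff ℝ (⊤ : ℕ∞) (w j)) :
    ContDiff ℝ (⊤ : ℕ∞) (prodFun w) :=
  contDiff_prod fun j _ => (hw j).comp (contDiff_apply ℝ ℝ j)

/-- `w'` is the derivative of the `i`-th factor. -/
lemma pd_prodFun {n : ℕ} {w : Fin n → ℝ → E} (hw : ∀ j, ContDiff ℝ (⊤ : ℕ∞) (w j)) (i : Fin n)
    (w' : ℝ → E) (h' : ∀ t, HasDerivAt (w i) (w' t) t) :
    pd i (prodFun w) = prodFun (Function.update w i w') := by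
  funext x
  have h1 : HasDerivAt (fun t => prodFun w (Function.update x i t)) (pd i (prodFun w) x) (x i) := by
    have h2 : HasFDerivAt (prodFun w) (fderiv ℝ (prodFun w) x) (Function.update x i (x i)) := by
      rw [Function.update_eq_self]
      exact ((contDiff_prodFun hw).differentiable (by simp) x).hasFDerivAt
    exact h2.comp_hasDerivAt (x i) (hasDerivAt_update x i (x i))
  have h3 : (fun t => prodFun w (Function.update x i t)) =
      fun t => w i t * ∏ j ∈ Finset.univ.erase i, w j (x j) := by
    funext t
    unfold prodFun
    rw [← Finset.mul_prod_erase _ _ (Finset.mem_univ i), Function.update_self]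
    congr 1
    refine Finset.prod_congr rfl fun j hj => ?_
    rw [Function.update_of_ne (Finset.ne_of_mem_erase hj)]
  rw [h3] at h1
  rw [h1.unique ((h' (x i)).mul_const _)]
  unfold prodFun
  rw [← Finset.mul_prod_erase _ _ (Finset.mem_univ i), Function.update_self]
  congr 1
  refine Finset.prod_congr rfl fun j hj => ?_
  rw [Function.update_of_ne (Finset.ne_of_mem_erase hj)]

lemma pd_pd_prodFun {n : ℕ} {w : Fin n → ℝ → E} (hw : ∀ j, ContDiff ℝ (⊤ : ℕ∞) (w j)) (i : Fin n)
    (w' w'' : ℝ → E) (hw' : ContDiff ℝ (⊤ : ℕ∞) w') (h' : ∀ t, HasDerivAt (w i) (w' t) t)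
    (h'' : ∀ t, HasDerivAt w' (w'' t) t) :
    pd i (pd i (prodFun w)) = prodFun (Function.update w i w'') := by
  rw [pd_prodFun hw i w' h', pd_prodFun (w' := w'') _ i, Function.update_idem]
  · simpa using h''
  · intro j
    by_cases hj : j = i
    · subst hj; simpa using hw'
    · rw [Function.update_of_ne hj]; exact hw j

end Green

/-! ### Fourier coefficients of eigenfunctions -/

lemma pd_add_periodic {n : ℕ} {E : Type*} [NormedAddCommGroup E] [NormedSpace ℝ E] {i : Fin n}
    {u : (Fin n → ℝ) → E} {c : Fin n → ℝ} (h : ∀ x, u (x + c) = u x) (x : Fin n → ℝ) :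
    pd i u (x + c) = pd i u x := by
  unfold pd
  rw [← fderiv_comp_add_right]
  simp only [h]

lemma insertNth_one {k : ℕ} (i : Fin (k + 1)) (y : Fin k → ℝ) :
    (i.insertNth (1:ℝ) y : Fin (k + 1) → ℝ) = (i.insertNth (0:ℝ) y : Fin (k + 1) → ℝ) +
      (Pi.single i (1:ℝ) : Fin (k + 1) → ℝ) := by
  funext j
  refine Fin.succAboveCases i ?_ (fun l => ?_) j <;> simp

lemma contDiff_ee_mul (c : ℝ) : ContDiff ℝ (⊤ : ℕ∞) (fun t : ℝ => ee (c * t)) := by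
  unfold ee
  have : ContDiff ℝ (⊤ : ℕ∞) (fun t : ℝ => (2 * π * ((c * t : ℝ) : ℂ) * Complex.I)) := by
    have h : ContDiff ℝ (⊤ : ℕ∞) (fun t : ℝ => ((c * t : ℝ) : ℂ)) :=
      Complex.ofRealCLM.contDiff.comp (contDiff_const.mul contDiff_id)
    exact (contDiff_const.mul h).mul contDiff_const
  exact this.cexp

lemma hasDerivAt_ee_mul (c t : ℝ) :
    HasDerivAt (fun t : ℝ => ee (c * t)) ((2 * π * c * Complex.I) * ee (c * t)) t := by
  have h : HasDerivAt (fun t : ℝ => (2 * π * ((c * t : ℝ) : ℂ) * Complex.I))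
      (2 * π * (c : ℂ) * Complex.I) t := by
    have h1 : HasDerivAt (fun t : ℝ => ((c * t : ℝ) : ℂ)) (c : ℂ) t := by
      have := ((hasDerivAt_id t).const_mul c).ofReal_comp
      simpa using this
    exact (h1.const_mul (2 * (π : ℂ))).mul_const Complex.I
  have := h.cexp
  unfold ee
  convert! this using 1
  ring

lemma ee_intCast (m : ℤ) : ee m = 1 := by
  unfold ee
  rw [Complex.exp_eq_one_iff]
  exact ⟨m, by push_cast; ring⟩

/-- The Fourier coefficient of an eigenfunction vanishes off the sphere `4π²|k|² = λ²`. -/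
lemma fourier_coeff_eq_zero {k : ℕ} {ψ : (Fin (k + 1) → ℝ) → ℝ} (hψ : ContDiff ℝ (⊤ : ℕ∞) ψ)
    (hper : ∀ x i, ψ (x + Pi.single i 1) = ψ x) {lam : ℝ}
    (hlap : ∀ x, lapP ψ x = -lam ^ 2 * ψ x) (K : Fin (k + 1) → ℤ)
    (hK : 4 * π ^ 2 * ∑ i, (K i : ℝ) ^ 2 ≠ lam ^ 2) :
    ∫ x in Icc (0 : Fin (k + 1) → ℝ) 1, (∏ i, ee (-(K i) * x i)) * (ψ x : ℂ) = 0 := by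
  set w : Fin (k + 1) → ℝ → ℂ := fun i t => ee (-(K i) * t) with hw
  have hwc : ∀ i, ContDiff ℝ (⊤ : ℕ∞) (w i) := fun i => contDiff_ee_mul _
  have hvc := contDiff_prodFun hwc
  set u : (Fin (k + 1) → ℝ) → ℂ := fun x => (ψ x : ℂ) with hu
  have huc : ContDiff ℝ (⊤ : ℕ∞) u := Complex.ofRealCLM.contDiff.comp hψ
  have hpdu : ∀ {f : (Fin (k + 1) → ℝ) → ℝ}, ContDiff ℝ (⊤ : ℕ∞) f → ∀ i,
      pd i (fun x => (f x : ℂ)) = fun x => ((pd i f x : ℝ) : ℂ) := by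
    intro f hf i
    funext x
    have h1 : HasFDerivAt f (fderiv ℝ f x) x := (hf.differentiable (by simp) x).hasFDerivAt
    have h2 : HasFDerivAt (fun x => (f x : ℂ)) (Complex.ofRealCLM.comp (fderiv ℝ f x)) x :=
      Complex.ofRealCLM.hasFDerivAt.comp x h1
    unfold pd
    rw [h2.fderiv]; simp
  have hlapu : ∀ x, lapP u x = -lam ^ 2 * u x := by
    intro x
    have : lapP u x = ((lapP ψ x : ℝ) : ℂ) := by
      unfold lapP
      push_cast
      refine Finset.sum_congr rfl fun i _ => ?_
      rw [hu, hpdu hψ i, hpdu (contDiff_pd hψ i) i]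
    rw [this, hlap]; simp [hu]
  have hlapv : ∀ x, lapP (prodFun w) x = -(4 * π ^ 2 * ∑ i, (K i : ℝ) ^ 2 : ℝ) * prodFun w x := by
    intro x
    unfold lapP
    push_cast
    rw [Finset.mul_sum, ← Finset.sum_neg_distrib, Finset.sum_mul]
    refine Finset.sum_congr rfl fun i _ => ?_
    have hd : ∀ t, HasDerivAt (w i) ((2 * π * (-(K i) : ℝ) * Complex.I) * w i t) t := by
      intro t
      exact hasDerivAt_ee_mul _ t
    rw [pd_pd_prodFun hwc i _ (fun t => (2 * π * (-(K i) : ℝ) * Complex.I) *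
      ((2 * π * (-(K i) : ℝ) * Complex.I) * w i t)) (contDiff_const.mul (hwc i)) hd
      (fun t => (hd t).const_mul _)]
    unfold prodFun
    rw [← Finset.mul_prod_erase _ _ (Finset.mem_univ i),
      ← Finset.mul_prod_erase _ (fun j => w j (x j)) (Finset.mem_univ i), Function.update_self]
    have h3 : ∏ j ∈ Finset.univ.erase i, Function.update w i (fun t =>
        (2 * π * (-(K i) : ℝ) * Complex.I) *
      ((2 * π * (-(K i) : ℝ) * Complex.I) * w i t)) j (x j) =
        ∏ j ∈ Finset.univ.erase i, w j (x j) := by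
      refine Finset.prod_congr rfl fun j hj => ?_
      rw [Function.update_of_ne (Finset.ne_of_mem_erase hj)]
    rw [h3]
    push_cast
    linear_combination (4 * (π:ℂ) ^ 2 * (K i : ℂ) ^ 2 * (w i (x i) *
      ∏ j ∈ Finset.univ.erase i, w j (x j))) * Complex.I_sq
  have hperu : ∀ i x, u (x + Pi.single i 1) = u x := by
    intro i x; simp only [hu, hper]
  have hperv : ∀ i x, prodFun w (x + Pi.single i 1) = prodFun w x := by
    intro i x
    unfold prodFun
    refine Finset.prod_congr rfl fun j _ => ?_
    simp only [hw, Pi.add_apply, mul_add, ee_add]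
    by_cases hj : j = i
    · subst hj
      have := ee_intCast (-(K j))
      push_cast at this
      simp [this]
    · simp [hj, ee_zero]
  have hg := green huc hvc (a := 0) (b := 1) (zero_le_one) (by
    intro i y
    simp only [Pi.one_apply, Pi.zero_apply, insertNth_one]
    rw [pd_add_periodic (hperu i), pd_add_periodic (hperv i), hperu, hperv])
  simp only [hlapu, hlapv] at hg
  have h1 : ∀ x, -(lam:ℂ) ^ 2 * u x * prodFun w x -
      u x * (-(4 * π ^ 2 * ∑ i, (K i : ℝ) ^ 2 : ℝ) * prodFun w x) =
      ((4 * π ^ 2 * ∑ i, (K i : ℝ) ^ 2 - lam ^ 2 : ℝ) : ℂ) *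
        ((∏ i, ee (-(K i) * x i)) * (ψ x : ℂ)) := by
    intro x
    have : prodFun w x = ∏ i, ee (-(K i) * x i) := rfl
    rw [this, hu]; push_cast; ring
  simp only [h1] at hg
  rw [integral_const_mul] at hg
  refine (mul_eq_zero.1 hg).resolve_left ?_
  exact_mod_cast sub_ne_zero.2 hK

/-! ### Eigenfunctions are trigonometric polynomials -/

/-- A continuous periodic function descends to the torus `(ℝ/ℤ)ⁿ`. -/
lemma continuous_torus_lift {n : ℕ} {ψ : (Fin n → ℝ) → ℂ} (hψ : Continuous ψ)
    (hper : ∀ (x : Fin n → ℝ) (k : Fin n → ℤ), ψ (x + fun i => (k i : ℝ)) = ψ x) :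
    ∃ f : C(UnitAddTorus (Fin n), ℂ), ∀ x : Fin n → ℝ, f (fun i => (x i : UnitAddCircle)) = ψ x := by
  let f : UnitAddTorus (Fin n) → ℂ := fun y => ψ fun i => (AddCircle.equivIoc (1:ℝ) 0 (y i)).1
  have hf : ∀ x : Fin n → ℝ, f (fun i => (x i : UnitAddCircle)) = ψ x := by
    intro x
    have h1 : ∀ i, ∃ m : ℤ, (AddCircle.equivIoc (1:ℝ) 0 (x i : UnitAddCircle)).1 = x i + m := by
      intro i
      have h2 : (((AddCircle.equivIoc (1:ℝ) 0 (x i : UnitAddCircle)).1 : ℝ) : UnitAddCircle) =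
          (x i : UnitAddCircle) :=
        (AddCircle.equivIoc (1:ℝ) 0).symm_apply_apply (x i : UnitAddCircle)
      rw [← sub_eq_zero, ← AddCircle.coe_sub, AddCircle.coe_eq_zero_iff] at h2
      obtain ⟨m, hm⟩ := h2
      exact ⟨m, by rw [zsmul_eq_mul, mul_one] at hm; linarith⟩
    choose m hm using h1
    show ψ _ = ψ x
    rw [← hper x m]
    congr 1
    funext i
    exact hm i
  have hq : IsOpenQuotientMap (Pi.map (fun (_ : Fin n) (t : ℝ) => (t : UnitAddCircle))) :=
    .piMap fun _ => QuotientAddGroup.isOpenQuotientMap_mk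
  refine ⟨⟨f, ?_⟩, hf⟩
  rw [hq.isQuotientMap.continuous_iff]
  convert! hψ using 1
  funext x
  exact hf x

/-- Only the finitely many lattice points on the sphere `4π²|K|² = lam²` carry a Fourier coefficient,
so the Fourier series is a finite sum. -/
lemma exists_fourier {k : ℕ} {ψ : (Fin (k + 1) → ℝ) → ℝ} (hψ : ContDiff ℝ (⊤ : ℕ∞) ψ)
    (hper : ∀ (x : Fin (k + 1) → ℝ) (m : Fin (k + 1) → ℤ), ψ (x + fun i => (m i : ℝ)) = ψ x)
    {lam : ℝ} (hlam : 0 < lam) (hlap : ∀ x, lapP ψ x = -lam ^ 2 * ψ x) :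
    ∃ (S : Finset (Fin (k + 1) → ℤ)) (c : (Fin (k + 1) → ℤ) → ℂ),
      (∀ K ∈ S, 4 * π ^ 2 * ∑ i, (K i : ℝ) ^ 2 = lam ^ 2) ∧
      ∀ x, (ψ x : ℂ) = ∑ K ∈ S, c K * ∏ i, ee (K i * x i) := by
  obtain ⟨f, hf⟩ := continuous_torus_lift (ψ := fun x => (ψ x : ℂ))
    (Complex.continuous_ofReal.comp hψ.continuous) (fun x m => by rw [hper])
  have hmF : ∀ (K : Fin (k + 1) → ℤ) (x : Fin (k + 1) → ℝ),
      UnitAddTorus.mFourier K (fun i => (x i : UnitAddCircle)) = ∏ i, ee (K i * x i) := by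
    intro K x
    show ∏ i, fourier (K i) (x i : UnitAddCircle) = _
    refine Finset.prod_congr rfl fun i _ => ?_
    rw [fourier_coe_apply]
    unfold ee
    congr 1; push_cast; ring
  have hcoef : ∀ K : Fin (k + 1) → ℤ, 4 * π ^ 2 * ∑ i, (K i : ℝ) ^ 2 ≠ lam ^ 2 →
      UnitAddTorus.mFourierCoeff f K = 0 := by
    intro K hK
    rw [UnitAddTorus.mFourierCoeff_eq_integral f K 0]
    have h1 : {x : Fin (k + 1) → ℝ | ∀ i, x i ∈ Ioc ((0 : Fin (k + 1) → ℝ) i)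
        ((0 : Fin (k + 1) → ℝ) i + 1)} = Set.pi univ fun i => Ioc ((0 : Fin (k + 1) → ℝ) i)
        ((1 : Fin (k + 1) → ℝ) i) := by
      ext x; simp [Set.mem_pi]
    rw [h1, volume_pi, setIntegral_congr_set (Measure.univ_pi_Ioc_ae_eq_Icc), ← volume_pi]
    rw [← fourier_coeff_eq_zero hψ (fun x i => ?_) hlap K hK]
    · congr 1
      funext x
      rw [hf, hmF, smul_eq_mul]
      simp
    · rw [← hper x (Pi.single i 1)]
      congr 2; funext l
      by_cases hl : l = i
      · subst hl; simp
      · simp [hl]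
  obtain ⟨D, hD⟩ := exists_nat_ge lam
  let S0 : Finset (Fin (k + 1) → ℤ) := Fintype.piFinset fun _ => Finset.Icc (-(D:ℤ)) D
  classical
  let S := S0.filter fun K => 4 * π ^ 2 * ∑ i, (K i : ℝ) ^ 2 = lam ^ 2
  have hS : ∀ K, K ∉ S → UnitAddTorus.mFourierCoeff f K = 0 := by
    intro K hKS
    apply hcoef
    intro hK
    apply hKS
    refine Finset.mem_filter.2 ⟨Fintype.mem_piFinset.2 fun i => ?_, hK⟩
    rw [Finset.mem_Icc, ← abs_le]
    have h1 : (K i : ℝ) ^ 2 ≤ ∑ i, (K i : ℝ) ^ 2 :=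
      Finset.single_le_sum (f := fun i => (K i : ℝ) ^ 2) (fun _ _ => sq_nonneg _)
        (Finset.mem_univ i)
    have h2 : (K i : ℝ) ^ 2 ≤ lam ^ 2 := by
      have : 1 ≤ 4 * π ^ 2 := by nlinarith [Real.pi_gt_three]
      nlinarith [sq_nonneg (K i : ℝ)]
    have h3 : |(K i : ℝ)| ≤ lam := abs_le_of_sq_le_sq h2 hlam.le
    have h4 : |(K i : ℝ)| ≤ D := h3.trans hD
    exact_mod_cast h4
  refine ⟨S, UnitAddTorus.mFourierCoeff f, fun K hK => (Finset.mem_filter.1 hK).2, fun x => ?_⟩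
  have hsum : Summable (UnitAddTorus.mFourierCoeff f) :=
    summable_of_ne_finset_zero (s := S) hS
  have h1 := UnitAddTorus.hasSum_mFourier_series_apply_of_summable hsum
    (fun i => (x i : UnitAddCircle))
  have h2 : HasSum (fun K => UnitAddTorus.mFourierCoeff f K •
      UnitAddTorus.mFourier K (fun i => (x i : UnitAddCircle))) _ :=
    hasSum_sum_of_ne_finset_zero (s := S) (fun K hK => by rw [hS K hK, zero_smul])
  rw [← hf, h1.unique h2]
  refine Finset.sum_congr rfl fun K _ => ?_
  rw [hmF, smul_eq_mul]

/-- A nonzero eigenfunction has at least one frequency, and it is not `0`; hence `lam ≥ 2π`. -/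
lemma exists_trigPoly {k : ℕ} {ψ : (Fin (k + 1) → ℝ) → ℝ} (hψ : ContDiff ℝ (⊤ : ℕ∞) ψ)
    (hper : ∀ (x : Fin (k + 1) → ℝ) (m : Fin (k + 1) → ℤ), ψ (x + fun i => (m i : ℝ)) = ψ x)
    {lam : ℝ} (hlam : 0 < lam) (hlap : ∀ x, lapP ψ x = -lam ^ 2 * ψ x)
    (hne : ∃ x, ψ x ≠ 0) : 2 * π ≤ lam ∧ ∃ D : ℕ, (D : ℝ) ≤ lam ∧ TrigPoly D ψ := by
  obtain ⟨S, c, hS, hrep⟩ := exists_fourier hψ hper hlam hlap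
  have hpi := Real.pi_pos
  constructor
  · obtain ⟨x, hx⟩ := hne
    have hSne : S.Nonempty := by
      by_contra h
      rw [Finset.not_nonempty_iff_eq_empty] at h
      have := hrep x
      rw [h] at this
      simp at this
      exact hx this
    obtain ⟨K, hK⟩ := hSne
    have h1 := hS K hK
    have h2 : (1:ℝ) ≤ ∑ i, (K i : ℝ) ^ 2 := by
      have h3 : 0 < ∑ i, (K i) ^ 2 := by
        have h4 : (0:ℝ) < ∑ i, (K i : ℝ) ^ 2 := by
          by_contra hcon
          push Not at hcon
          have : 0 < lam ^ 2 := by positivity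
          have : 4 * π ^ 2 * ∑ i, (K i : ℝ) ^ 2 ≤ 0 :=
            mul_nonpos_of_nonneg_of_nonpos (by positivity) hcon
          linarith
        exact_mod_cast h4
      exact_mod_cast h3
    refine le_of_sq_le_sq ?_ hlam.le
    rw [← h1]; nlinarith [sq_nonneg π]
  · refine ⟨⌊lam⌋₊, Nat.floor_le hlam.le, S.card, fun j => (S.equivFin.symm j).1,
      fun j => c (S.equivFin.symm j).1, fun j i => ?_, fun x => ?_⟩
    · have h0 := hS _ (S.equivFin.symm j).2
      set K := (S.equivFin.symm j).1
      have h1 : (K i : ℝ) ^ 2 ≤ ∑ i, (K i : ℝ) ^ 2 :=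
        Finset.single_le_sum (f := fun i => (K i : ℝ) ^ 2) (fun _ _ => sq_nonneg _)
          (Finset.mem_univ i)
      have h2 : (K i : ℝ) ^ 2 ≤ lam ^ 2 := by
        have : 1 ≤ 4 * π ^ 2 := by nlinarith [Real.pi_gt_three]
        nlinarith [sq_nonneg (K i : ℝ)]
      have h3 : |(K i : ℝ)| ≤ lam := abs_le_of_sq_le_sq h2 hlam.le
      have h4 : (((K i).natAbs : ℕ) : ℝ) ≤ lam := by
        rw [Nat.cast_natAbs]; exact_mod_cast h3
      have h5 := Nat.le_floor h4
      show |K i| ≤ _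
      rw [Int.abs_eq_natAbs]
      exact_mod_cast h5
    · rw [hrep, ← Finset.sum_coe_sort, ← Equiv.sum_comp S.equivFin.symm]

/-! ### An isoperimetric inequality in a cube -/

/-- Mixing the coordinates of two independent points: `x` on the indices satisfying `p`, `y`
elsewhere. -/
def mix {n : ℕ} (p : Fin n → Prop) [DecidablePred p] (z : (Fin n → ℝ) × (Fin n → ℝ)) :
    Fin n → ℝ := fun i => if p i then z.1 i else z.2 i

lemma measurable_mix {n : ℕ} (p : Fin n → Prop) [DecidablePred p] : Measurable (mix p) := by
  refine measurable_pi_lambda _ fun i => ?_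
  unfold mix
  by_cases h : p i
  · simp only [h, if_true]; fun_prop
  · simp only [h, if_false]; fun_prop

/-- Mixing preserves product measure: of two independent points with the same product distribution
the mixture has that distribution again (here with total mass `c` in each coordinate). -/
lemma map_mix {n : ℕ} (p : Fin n → Prop) [DecidablePred p] (μ : Fin n → Measure ℝ)
    [∀ i, IsFiniteMeasure (μ i)] (c : ENNReal) (hc0 : c ≠ 0) (hc : c ≠ ⊤)
    (hμ : ∀ i, μ i univ = c) :
    ((Measure.pi μ).prod (Measure.pi μ)).map (mix p) = c ^ n • Measure.pi μ := by
  have hcn0 : c ^ n ≠ 0 := pow_ne_zero _ hc0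
  have hcn : c ^ n ≠ ⊤ := ENNReal.pow_ne_top hc
  have h1 : (c ^ n)⁻¹ • ((Measure.pi μ).prod (Measure.pi μ)).map (mix p) = Measure.pi μ := by
    symm
    refine Measure.pi_eq fun s hs => ?_
    rw [Measure.smul_apply, Measure.map_apply (measurable_mix p) (MeasurableSet.univ_pi hs)]
    have h2 : mix p ⁻¹' (Set.pi univ s) =
        (Set.pi univ fun i => if p i then s i else univ) ×ˢ
        (Set.pi univ fun i => if p i then univ else s i) := by
      ext z
      simp only [mem_preimage, mem_univ_pi, mem_prod, mix, ← forall_and]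
      refine forall_congr' fun i => ?_
      by_cases h : p i <;> simp [h]
    rw [h2, Measure.prod_prod, Measure.pi_pi, Measure.pi_pi, ← Finset.prod_mul_distrib]
    have h3 : ∀ i, μ i (if p i then s i else univ) * μ i (if p i then univ else s i) =
        c * μ i (s i) := by
      intro i
      by_cases h : p i <;> simp [h, hμ, mul_comm]
    simp only [h3]
    rw [Finset.prod_mul_distrib, Finset.prod_const, Finset.card_univ, Fintype.card_fin,
      smul_eq_mul, ← mul_assoc, ENNReal.inv_mul_cancel hcn0 hcn, one_mul]
  have h4 := congrArg (fun m => c ^ n • m) h1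
  simpa only [smul_smul, ENNReal.mul_inv_cancel hcn0 hcn, one_smul] using h4

/-- The half-open cube with corner `a` and side `s`. -/
def cell {n : ℕ} (a : Fin n → ℝ) (s : ℝ) : Set (Fin n → ℝ) :=
  Set.pi univ fun i => Ico (a i) (a i + s)

lemma measurableSet_cell {n : ℕ} (a : Fin n → ℝ) (s : ℝ) : MeasurableSet (cell a s) :=
  MeasurableSet.univ_pi fun _ => measurableSet_Ico

lemma volume_cell {n : ℕ} (a : Fin n → ℝ) (s : ℝ) :
    volume (cell a s) = ENNReal.ofReal s ^ n := by
  rw [cell, volume_pi, Measure.pi_pi]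
  simp

/-- A continuous function taking opposite signs at two points of a cube vanishes on one of the
coordinate segments joining the successive mixtures of the two points. -/
lemma exists_zero_step {k : ℕ} {ψ : (Fin (k + 1) → ℝ) → ℝ} (hψ : Continuous ψ)
    {a : Fin (k + 1) → ℝ} {s : ℝ} {x y : Fin (k + 1) → ℝ} (hx : x ∈ cell a s) (hy : y ∈ cell a s)
    (hxp : 0 < ψ x) (hyn : ψ y < 0) :
    ∃ j : Fin (k + 1), (fun l => mix (fun i => i < j) (x, y) (j.succAbove l)) ∈
      (fun z : Fin (k + 1) → ℝ => fun l => z (j.succAbove l)) '' {z ∈ cell a s | ψ z = 0} := by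
  let Z : ℕ → Fin (k + 1) → ℝ := fun m i => if i.1 < m then x i else y i
  have hZ0 : Z 0 = y := by funext i; simp [Z]
  have hZn : Z (k + 1) = x := by funext i; simp only [Z, i.2, if_true]
  have hex : ∃ m, 0 < ψ (Z m) := ⟨k + 1, by rwa [hZn]⟩
  classical
  let m := Nat.find hex
  have hm : 0 < ψ (Z m) := Nat.find_spec hex
  have hmle : m ≤ k + 1 := Nat.find_min' hex (by rwa [hZn])
  have hm0 : m ≠ 0 := by
    intro h; rw [h, hZ0] at hm; linarith
  obtain ⟨j0, hj0⟩ := Nat.exists_eq_succ_of_ne_zero hm0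
  have hneg : ψ (Z j0) ≤ 0 := not_lt.1 (Nat.find_min hex (show j0 < m by omega))
  have hjk : j0 < k + 1 := by omega
  let j : Fin (k + 1) := ⟨j0, hjk⟩
  have hup0 : Function.update (Z j0) j (y j) = Z j0 := by
    rw [Function.update_eq_self_iff]; simp [Z, j]
  have hup1 : Function.update (Z j0) j (x j) = Z m := by
    funext i
    by_cases hi : i = j
    · subst hi; simp [Z, j, hj0]
    · rw [Function.update_of_ne hi]
      have : i.1 ≠ j0 := fun h => hi (Fin.ext h)
      simp only [Z, hj0]
      by_cases h : i.1 < j0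
      · simp [h, show i.1 < j0.succ by omega]
      · simp [h, show ¬ i.1 < j0.succ by omega]
  have hcont : ContinuousOn (fun t => ψ (Function.update (Z j0) j t)) (uIcc (y j) (x j)) :=
    (hψ.comp (continuous_const.update j continuous_id)).continuousOn
  have hivt := intermediate_value_uIcc hcont
  have h0 : (0:ℝ) ∈ uIcc (ψ (Function.update (Z j0) j (y j))) (ψ (Function.update (Z j0) j (x j))) := by
    rw [hup0, hup1]
    exact Icc_subset_uIcc ⟨hneg, hm.le⟩
  obtain ⟨t, ht, ht0⟩ := hivt h0
  have htm : t ∈ Ico (a j) (a j + s) := by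
    have : OrdConnected (Ico (a j) (a j + s)) := ordConnected_Ico
    exact this.uIcc_subset (hy j (mem_univ _)) (hx j (mem_univ _)) ht
  refine ⟨j, Function.update (Z j0) j t, ⟨?_, ht0⟩, ?_⟩
  · intro i _
    by_cases hi : i = j
    · subst hi; simpa using htm
    · rw [Function.update_of_ne hi]
      simp only [Z]
      split_ifs
      · exact hx i (mem_univ _)
      · exact hy i (mem_univ _)
  · funext l
    simp only [Function.update_of_ne (Fin.succAbove_ne j l)]
    rfl

/-- For each pair `(x, y)` with `ψ x > 0 > ψ y`, `exists_zero_step` gives a direction `j` in which the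
mixture of `x` and `y` projects into the projection of the nodal set; the measure of such pairs is
computed by `map_mix`. -/
lemma iso_cell {k : ℕ} {ψ : (Fin (k + 1) → ℝ) → ℝ} (hψ : Continuous ψ)
    (a : Fin (k + 1) → ℝ) {s : ℝ} (hs : 0 < s) :
    volume {x ∈ cell a s | 0 < ψ x} * volume {x ∈ cell a s | ψ x < 0} ≤
      ENNReal.ofReal s ^ (k + 2) * ∑ j : Fin (k + 1), volume
        ((fun z : Fin (k + 1) → ℝ => fun l => z (j.succAbove l)) '' {z ∈ cell a s | ψ z = 0}) := by
  set c := ENNReal.ofReal s with hcdef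
  have hc0 : c ≠ 0 := by simpa [hcdef] using hs
  have hc : c ≠ ⊤ := ENNReal.ofReal_ne_top
  set μ : Fin (k + 1) → Measure ℝ := fun i => volume.restrict (Ico (a i) (a i + s)) with hμdef
  have hμ : ∀ i, μ i univ = c := by intro i; simp [hμdef, hcdef]
  have hfin : ∀ i, IsFiniteMeasure (μ i) := fun i => ⟨by rw [hμ]; exact hc.lt_top⟩
  have hpi : Measure.pi μ = volume.restrict (cell a s) := by
    rw [cell, volume_pi, Measure.restrict_pi_pi]
  set B : Fin (k + 1) → Set (Fin k → ℝ) := fun j =>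
    (fun z : Fin (k + 1) → ℝ => fun l => z (j.succAbove l)) '' {z ∈ cell a s | ψ z = 0} with hB
  have hPm : MeasurableSet {x ∈ cell a s | 0 < ψ x} :=
    (measurableSet_cell a s).inter (isOpen_lt continuous_const hψ).measurableSet
  have hMm : MeasurableSet {x ∈ cell a s | ψ x < 0} :=
    (measurableSet_cell a s).inter (isOpen_lt hψ continuous_const).measurableSet
  have hP : Measure.pi μ {x ∈ cell a s | 0 < ψ x} = volume {x ∈ cell a s | 0 < ψ x} := by
    rw [hpi, Measure.restrict_apply hPm, inter_eq_left.2 fun x hx => hx.1]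
  have hM : Measure.pi μ {x ∈ cell a s | ψ x < 0} = volume {x ∈ cell a s | ψ x < 0} := by
    rw [hpi, Measure.restrict_apply hMm, inter_eq_left.2 fun x hx => hx.1]
  rw [← hP, ← hM, ← Measure.prod_prod, Finset.mul_sum]
  refine le_trans (measure_mono (t := ⋃ j : Fin (k + 1), mix (fun i => i < j) ⁻¹'
    ((fun z : Fin (k + 1) → ℝ => fun l => z (j.succAbove l)) ⁻¹'
      (toMeasurable volume (B j)))) ?_) ?_
  · rintro ⟨x, y⟩ ⟨hx, hy⟩
    obtain ⟨j, hj⟩ := exists_zero_step hψ hx.1 hy.1 hx.2 hy.2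
    exact mem_iUnion.2 ⟨j, subset_toMeasurable _ _ hj⟩
  · refine (measure_iUnion_fintype_le _ _).trans (Finset.sum_le_sum fun j _ => ?_)
    have hmeasp : Measurable (fun z : Fin (k + 1) → ℝ => fun l => z (j.succAbove l)) := by
      fun_prop
    rw [← Measure.map_apply (measurable_mix _) (hmeasp (measurableSet_toMeasurable _ _)),
      map_mix _ μ c hc0 hc hμ, Measure.smul_apply, smul_eq_mul]
    have h1 : (Measure.pi μ) ((fun z : Fin (k + 1) → ℝ => fun l => z (j.succAbove l)) ⁻¹'
        toMeasurable volume (B j)) = c * (Measure.pi fun l => μ (j.succAbove l))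
          (toMeasurable volume (B j)) := by
      have h2 := measurePreserving_piFinSuccAbove μ j
      have h3 : (fun z : Fin (k + 1) → ℝ => fun l => z (j.succAbove l)) ⁻¹'
          toMeasurable volume (B j) = (MeasurableEquiv.piFinSuccAbove (fun _ => ℝ) j) ⁻¹'
          (univ ×ˢ toMeasurable volume (B j)) := by
        ext z
        simp only [mem_preimage, mem_prod, mem_univ, true_and]
        exact Iff.rfl
      rw [h3, h2.measure_preimage_equiv, Measure.prod_prod, hμ]
    rw [h1, ← mul_assoc, ← pow_succ]
    refine mul_le_mul_right ?_ _
    have h4 : (Measure.pi fun l => μ (j.succAbove l)) ≤ volume := by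
      simp only [hμdef]
      rw [← Measure.restrict_pi_pi, ← volume_pi]
      exact Measure.restrict_le_self
    exact (h4 _).trans (measure_toMeasurable _).le

/-! ### Hausdorff measure of the nodal set and sign changes in a cube -/

/-- Forgetting one coordinate is `1`-Lipschitz from the Euclidean norm to the sup norm, and
`k`-dimensional Hausdorff measure on `Fin k → ℝ` is Lebesgue measure. -/
lemma volume_proj_le_hausdorff {k : ℕ} (j : Fin (k + 1)) (E : Set (Fin (k + 1) → ℝ)) :
    volume ((fun z : Fin (k + 1) → ℝ => fun l => z (j.succAbove l)) '' E) ≤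
      μH[(k : ℝ)] ((WithLp.toLp 2 : (Fin (k + 1) → ℝ) → EuclideanSpace ℝ (Fin (k + 1))) '' E) := by
  let f : EuclideanSpace ℝ (Fin (k + 1)) → (Fin k → ℝ) := fun x l => x (j.succAbove l)
  have hf : LipschitzWith 1 f := by
    refine LipschitzWith.of_dist_le_mul fun x y => ?_
    rw [NNReal.coe_one, one_mul, dist_pi_le_iff dist_nonneg]
    intro l
    rw [dist_eq_norm, dist_eq_norm]
    exact PiLp.norm_apply_le (x - y) (j.succAbove l)
  have h1 := hf.hausdorffMeasure_image_le (d := (k : ℝ)) (Nat.cast_nonneg k)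
    ((WithLp.toLp 2 : (Fin (k + 1) → ℝ) → EuclideanSpace ℝ (Fin (k + 1))) '' E)
  rw [image_image] at h1
  have h2 : (μH[(k : ℝ)] : Measure (Fin k → ℝ)) = volume := by
    have := hausdorffMeasure_pi_real (ι := Fin k)
    rwa [Fintype.card_fin] at this
  rw [h2] at h1
  simpa [f] using h1

/-- If both signs fill the proportion `κ` of the cell, the nodal set in it is at least of size
`κ² s^k / (k + 1)`. -/
lemma hausdorff_cell {k : ℕ} {ψ : (Fin (k + 1) → ℝ) → ℝ} (hψ : Continuous ψ)
    (a : Fin (k + 1) → ℝ) {s κ : ℝ} (hs : 0 < s) (hκ : 0 ≤ κ)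
    (hP : ENNReal.ofReal (κ * s ^ (k + 1)) ≤ volume {x ∈ cell a s | 0 < ψ x})
    (hM : ENNReal.ofReal (κ * s ^ (k + 1)) ≤ volume {x ∈ cell a s | ψ x < 0}) :
    ENNReal.ofReal (κ ^ 2 / (k + 1) * s ^ k) ≤
      μH[(k : ℝ)] ((WithLp.toLp 2 : (Fin (k + 1) → ℝ) → EuclideanSpace ℝ (Fin (k + 1))) ''
        {z ∈ cell a s | ψ z = 0}) := by
  set H := μH[(k : ℝ)] ((WithLp.toLp 2 : (Fin (k + 1) → ℝ) → EuclideanSpace ℝ (Fin (k + 1))) ''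
        {z ∈ cell a s | ψ z = 0}) with hH
  have h1 := iso_cell hψ a hs
  have h2 : ∑ j : Fin (k + 1), volume
        ((fun z : Fin (k + 1) → ℝ => fun l => z (j.succAbove l)) '' {z ∈ cell a s | ψ z = 0}) ≤
        (k + 1 : ℕ) * H := by
    refine (Finset.sum_le_sum fun j _ => volume_proj_le_hausdorff j _).trans ?_
    simp [hH]
  have h3 : ENNReal.ofReal (κ * s ^ (k + 1)) * ENNReal.ofReal (κ * s ^ (k + 1)) ≤
      ENNReal.ofReal s ^ (k + 2) * ((k + 1 : ℕ) * H) :=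
    (mul_le_mul' hP hM).trans (h1.trans (mul_le_mul_right h2 _))
  by_cases hT : H = ⊤
  · rw [hT]; exact le_top
  rw [← ENNReal.ofReal_toReal hT] at h3 ⊢
  set r := H.toReal
  have hr : 0 ≤ r := ENNReal.toReal_nonneg
  rw [← ENNReal.ofReal_mul (by positivity), ← ENNReal.ofReal_pow hs.le, ← ENNReal.ofReal_natCast,
    ← ENNReal.ofReal_mul (by positivity), ← ENNReal.ofReal_mul (by positivity),
    ENNReal.ofReal_le_ofReal_iff (by positivity)] at h3
  refine ENNReal.ofReal_le_ofReal ?_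
  have h4 : (κ ^ 2 * s ^ k) * s ^ (k + 2) ≤ ((k + 1) * r) * s ^ (k + 2) := by
    push_cast at h3
    calc _ = κ * s ^ (k + 1) * (κ * s ^ (k + 1)) := by ring
      _ ≤ _ := h3
      _ = _ := by ring
  have h5 := le_of_mul_le_mul_right h4 (by positivity)
  rw [div_mul_eq_mul_div, div_le_iff₀ (by positivity)]
  linarith

/-- A function orthogonal to a positive weight, and of size comparable with its `L²` mean on a
substantial set, is positive on a substantial set. -/
lemma sign_cell {n : ℕ} {ψ W : (Fin n → ℝ) → ℝ} (hψ : Continuous ψ) (hW : Continuous W)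
    (a : Fin n → ℝ) {s ρ θ c b : ℝ} (hs : 0 < s) (hρ : 0 < ρ) (hθ : 0 < θ) (hc : 0 < c)
    (hb : 0 < b) (hW0 : ∀ x ∈ cell a s, 0 ≤ W x) (hW1 : ∀ x ∈ cell a s, W x ≤ 1)
    (horth : ∫ x in cell a s, W x * ψ x = 0)
    (hI : ∫ x in cell a s, ψ x ^ 2 ≤ c * s ^ n * b ^ 2)
    {H : Set (Fin n → ℝ)} (hHm : MeasurableSet H) (hHc : H ⊆ cell a s)
    (hHW : ∀ x ∈ H, ρ ≤ W x) (hHψ : ∀ x ∈ H, b ≤ |ψ x|)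
    (hHv : θ * s ^ n ≤ volume.real H) :
    (ρ * θ / 2) ^ 2 / c * s ^ n ≤ volume.real {x ∈ cell a s | 0 < ψ x} := by
  have hfin : volume (cell a s) ≠ ⊤ := by
    rw [volume_cell]; exact ENNReal.pow_ne_top ENNReal.ofReal_ne_top
  have hcm := measurableSet_cell a s
  have hintg : ∀ {f : (Fin n → ℝ) → ℝ}, Continuous f → IntegrableOn f (cell a s) := by
    intro f hf
    refine (hf.continuousOn.integrableOn_compact
      (isCompact_univ_pi fun i => isCompact_Icc (a := a i) (b := a i + s))).mono_set ?_
    exact Set.pi_mono fun i _ => Ico_subset_Icc_self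
  have hi1 : IntegrableOn (fun x => W x * |ψ x|) (cell a s) := hintg (hW.mul hψ.abs)
  have hi2 : IntegrableOn (fun x => W x * ψ x) (cell a s) := hintg (hW.mul hψ)
  have hi3 : ∀ r : ℝ, IntegrableOn (fun x => r * ψ x ^ 2) (cell a s) :=
    fun r => hintg (continuous_const.mul (hψ.pow 2))
  set P := {x ∈ cell a s | 0 < ψ x} with hP
  have hPm : MeasurableSet P := hcm.inter (isOpen_lt continuous_const hψ).measurableSet
  set γ := ρ * θ / 2 with hγ
  have hγ0 : 0 < γ := by positivity
  set t := c / γ with ht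
  have ht0 : 0 < t := by positivity
  have h1 : ρ * b * (θ * s ^ n) ≤ ∫ x in cell a s, W x * |ψ x| := by
    calc ρ * b * (θ * s ^ n) ≤ ρ * b * volume.real H := by gcongr
      _ = ∫ x in H, ρ * b := by rw [setIntegral_const, smul_eq_mul]; ring
      _ ≤ ∫ x in H, W x * |ψ x| := by
          refine setIntegral_mono_on ?_ (hi1.mono_set hHc) hHm ?_
          · exact integrableOn_const ((measure_mono hHc).trans_lt hfin.lt_top).ne
          · intro x hx
            exact mul_le_mul (hHW x hx) (hHψ x hx) hb.le (hρ.le.trans (hHW x hx))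
      _ ≤ _ := by
          refine setIntegral_mono_set hi1 ?_ hHc.eventuallyLE
          refine (ae_restrict_iff' hcm).2 (Filter.Eventually.of_forall fun x hx => ?_)
          exact mul_nonneg (hW0 x hx) (abs_nonneg _)
  have h2 : ∫ x in cell a s, W x * |ψ x| = ∫ x in cell a s, (W x * |ψ x| + W x * ψ x) := by
    rw [integral_add hi1 hi2, horth, add_zero]
  have hPi : IntegrableOn (P.indicator fun _ => b * t) (cell a s) :=
    (integrableOn_const hfin).indicator hPm
  have h3 : ∫ x in cell a s, (W x * |ψ x| + W x * ψ x) ≤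
      ∫ x in cell a s, (P.indicator (fun _ => b * t) x + (b * t)⁻¹ * ψ x ^ 2) := by
    refine setIntegral_mono_on (hi1.add hi2)
      (hPi.add (hi3 _)) hcm ?_
    intro x hx
    by_cases hpos : 0 < ψ x
    · have hxP : x ∈ P := ⟨hx, hpos⟩
      rw [indicator_of_mem hxP, abs_of_pos hpos]
      have h4 : W x * ψ x ≤ ψ x := mul_le_of_le_one_left hpos.le (hW1 x hx)
      have hbt : 0 < b * t := by positivity
      have h5 : b * t + (b * t)⁻¹ * ψ x ^ 2 - 2 * ψ x = (b * t)⁻¹ * (b * t - ψ x) ^ 2 := by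
        field_simp; ring
      have h6 : 0 ≤ (b * t)⁻¹ * (b * t - ψ x) ^ 2 := by positivity
      linarith
    · have hxP : x ∉ P := fun h => hpos h.2
      rw [indicator_of_notMem hxP, abs_of_nonpos (not_lt.1 hpos)]
      have : 0 ≤ (b * t)⁻¹ * ψ x ^ 2 := by positivity
      linarith
  have h4 : ∫ x in cell a s, (P.indicator (fun _ => b * t) x + (b * t)⁻¹ * ψ x ^ 2) =
      volume.real P * (b * t) + (b * t)⁻¹ * ∫ x in cell a s, ψ x ^ 2 := by
    rw [integral_add hPi (hi3 _), integral_const_mul,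
      setIntegral_indicator hPm, setIntegral_const, smul_eq_mul,
      inter_eq_right.2 (fun x hx => hx.1 : P ⊆ cell a s)]
  have h5 : ρ * b * (θ * s ^ n) ≤
      volume.real P * (b * t) + (b * t)⁻¹ * (c * s ^ n * b ^ 2) := by
    calc _ ≤ _ := h1
      _ = _ := h2
      _ ≤ _ := h3
      _ = _ := h4
      _ ≤ _ := by gcongr
  have h6 : (b * t)⁻¹ * (c * s ^ n * b ^ 2) = b * (γ * s ^ n) := by
    rw [ht]; field_simp
  have h7 : b * (γ * s ^ n) ≤ b * (t * volume.real P) := by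
    have h8 : ρ * b * (θ * s ^ n) = b * (γ * s ^ n) + b * (γ * s ^ n) := by rw [hγ]; ring
    rw [h6, h8] at h5
    linarith
  have h9 := le_of_mul_le_mul_left h7 hb
  rw [div_mul_eq_mul_div, div_le_iff₀ hc]
  have h10 : t * volume.real P * γ = c * volume.real P := by rw [ht]; field_simp
  nlinarith

/-! ### Weights orthogonal to eigenfunctions -/

/-- The closed cube of half the side, concentric with `cell a s`. -/
def halfCell {n : ℕ} (a : Fin n → ℝ) (s : ℝ) : Set (Fin n → ℝ) :=
  Set.pi univ fun i => Icc (a i + s / 4) (a i + 3 * s / 4)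

lemma setIntegral_cell {n : ℕ} (a : Fin n → ℝ) (s : ℝ) (f : (Fin n → ℝ) → ℝ) :
    ∫ x in cell a s, f x = ∫ x in Icc a (fun i => a i + s), f x := by
  unfold cell
  rw [volume_pi, setIntegral_congr_set (Measure.univ_pi_Ico_ae_eq_Icc (f := a)
    (g := fun i => a i + s))]

/-- The weight `W = (Δv + lam² v) / (14 (k + 1) β²)` with `v = ∏ sin²(β (xᵢ - aᵢ))`, `β = π/s`. Green's
identity has no boundary terms because `v` and its gradient vanish on the boundary of the cell. As
`Δv = 2β² ∑ᵢ Eᵢ - 4 (k + 1) β² v`, where `Eᵢ` omits the `i`-th factor of `v`, the lower bound on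
`lam` makes `W` nonnegative and the upper bound makes it at most `1`. -/
lemma exists_weight {k : ℕ} {ψ : (Fin (k + 1) → ℝ) → ℝ} (hψ : ContDiff ℝ (⊤ : ℕ∞) ψ)
    {lam : ℝ} (hlap : ∀ x, lapP ψ x = -lam ^ 2 * ψ x) (a : Fin (k + 1) → ℝ) {s : ℝ} (hs : 0 < s)
    (h1 : 4 * (k + 1) * (π / s) ^ 2 ≤ lam ^ 2) (h2 : lam ^ 2 ≤ 16 * (k + 1) * (π / s) ^ 2) :
    ∃ W : (Fin (k + 1) → ℝ) → ℝ, Continuous W ∧ (∀ x, 0 ≤ W x) ∧ (∀ x, W x ≤ 1) ∧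
      (∀ x ∈ halfCell a s, (1 / 2) ^ k / 7 ≤ W x) ∧ ∫ x in cell a s, W x * ψ x = 0 := by
  have hpi := Real.pi_pos
  set β := π / s with hβ
  have hβ0 : 0 < β := by positivity
  let w : Fin (k + 1) → ℝ → ℝ := fun i t => sin (β * (t - a i)) ^ 2
  let w' : Fin (k + 1) → ℝ → ℝ := fun i t => 2 * β * (sin (β * (t - a i)) * cos (β * (t - a i)))
  let w'' : Fin (k + 1) → ℝ → ℝ := fun i t => 2 * β ^ 2 * (1 - 2 * w i t)
  have hwc : ∀ i, ContDiff ℝ (⊤ : ℕ∞) (w i) := by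
    intro i; simp only [w]; fun_prop
  have hwc' : ∀ i, ContDiff ℝ (⊤ : ℕ∞) (w' i) := by
    intro i; simp only [w']; fun_prop
  have hlin : ∀ i t, HasDerivAt (fun t => β * (t - a i)) β t := by
    intro i t
    simpa using ((hasDerivAt_id t).sub_const (a i)).const_mul β
  have hd1 : ∀ i t, HasDerivAt (w i) (w' i t) t := by
    intro i t
    have := (hlin i t).sin.pow 2
    convert! this using 1
    simp [w']; ring
  have hd2 : ∀ i t, HasDerivAt (w' i) (w'' i t) t := by
    intro i t
    have := ((hlin i t).sin.mul (hlin i t).cos).const_mul (2 * β)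
    convert! this using 1
    have := Real.sin_sq_add_cos_sq (β * (t - a i))
    simp only [w'', w]
    linear_combination (-2 * β ^ 2) * this
  have hw0 : ∀ i t, 0 ≤ w i t := fun i t => sq_nonneg _
  have hw1 : ∀ i t, w i t ≤ 1 := fun i t => Real.sin_sq_le_one _
  have hvc := contDiff_prodFun hwc
  set v := prodFun w with hv
  let E : Fin (k + 1) → (Fin (k + 1) → ℝ) → ℝ := fun i x => ∏ j ∈ Finset.univ.erase i, w j (x j)
  have hvE : ∀ i x, v x = w i (x i) * E i x := by
    intro i x
    rw [hv]; unfold prodFun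
    rw [← Finset.mul_prod_erase _ _ (Finset.mem_univ i)]
  have hupd : ∀ i (f : ℝ → ℝ) x, prodFun (Function.update w i f) x = f (x i) * E i x := by
    intro i f x
    unfold prodFun
    rw [← Finset.mul_prod_erase _ _ (Finset.mem_univ i), Function.update_self]
    congr 1
    refine Finset.prod_congr rfl fun j hj => ?_
    rw [Function.update_of_ne (Finset.ne_of_mem_erase hj)]
  have hE0 : ∀ i x, 0 ≤ E i x := fun i x => Finset.prod_nonneg fun j _ => hw0 j _
  have hE1 : ∀ i x, E i x ≤ 1 :=
    fun i x => Finset.prod_le_one (fun j _ => hw0 j _) fun j _ => hw1 j _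
  have hv0 : ∀ x, 0 ≤ v x := fun x => Finset.prod_nonneg fun j _ => hw0 j _
  have hv1 : ∀ x, v x ≤ 1 :=
    fun x => Finset.prod_le_one (fun j _ => hw0 j _) fun j _ => hw1 j _
  have hEc : ∀ i, Continuous (E i) := by
    intro i
    exact continuous_finsetProd _ fun j _ => (hwc j).continuous.comp (continuous_apply j)
  have hlapv : ∀ x, lapP v x = 2 * β ^ 2 * ∑ i, E i x - 4 * (k + 1) * β ^ 2 * v x := by
    intro x
    unfold lapP
    have : ∀ i, pd i (pd i v) x = 2 * β ^ 2 * E i x - 4 * β ^ 2 * v x := by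
      intro i
      rw [hv, pd_pd_prodFun hwc i _ _ (hwc' i) (hd1 i) (hd2 i), hupd, ← hv, hvE i]
      simp only [w'']; ring
    simp only [this]
    rw [Finset.sum_sub_distrib, ← Finset.mul_sum]
    simp
    ring
  have hvan : ∀ (i : Fin (k + 1)) (x : Fin (k + 1) → ℝ), sin (β * (x i - a i)) = 0 →
      v x = 0 ∧ pd i v x = 0 := by
    intro i x hx
    constructor
    · rw [hvE i]; simp [w, hx]
    · rw [hv, pd_prodFun hwc i _ (hd1 i), hupd]; simp [w', hx]
  have hg := green hψ hvc (a := a) (b := fun i => a i + s) (fun i => by simp [hs.le]) (by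
    intro i y
    have e1 : sin (β * ((i.insertNth (a i + s) y : Fin (k + 1) → ℝ) i - a i)) = 0 := by
      rw [Fin.insertNth_apply_same, add_sub_cancel_left, hβ, div_mul_cancel₀ _ hs.ne', Real.sin_pi]
    have e2 : sin (β * ((i.insertNth (a i) y : Fin (k + 1) → ℝ) i - a i)) = 0 := by
      rw [Fin.insertNth_apply_same, sub_self, mul_zero, Real.sin_zero]
    rw [(hvan i _ e1).1, (hvan i _ e1).2, (hvan i _ e2).1, (hvan i _ e2).2]
    simp)
  set W : (Fin (k + 1) → ℝ) → ℝ := fun x => (14 * (k + 1) * β ^ 2)⁻¹ *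
    (2 * β ^ 2 * ∑ i, E i x + (lam ^ 2 - 4 * (k + 1) * β ^ 2) * v x) with hW
  have hcoef : (0:ℝ) ≤ lam ^ 2 - 4 * (k + 1) * β ^ 2 := by linarith
  have hsum0 : ∀ x, 0 ≤ ∑ i, E i x := fun x => Finset.sum_nonneg fun i _ => hE0 i x
  have hsum1 : ∀ x, ∑ i, E i x ≤ k + 1 := by
    intro x
    refine (Finset.sum_le_sum fun i _ => hE1 i x).trans ?_
    simp
  refine ⟨W, ?_, fun x => ?_, fun x => ?_, fun x hx => ?_, ?_⟩
  · refine continuous_const.mul (Continuous.add ?_ (continuous_const.mul hvc.continuous))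
    exact continuous_const.mul (continuous_finsetSum _ fun i _ => hEc i)
  · have := hsum0 x
    have := mul_nonneg hcoef (hv0 x)
    simp only [hW]; positivity
  · simp only [hW]
    rw [inv_mul_le_iff₀ (by positivity)]
    have e1 : 2 * β ^ 2 * ∑ i, E i x ≤ 2 * β ^ 2 * (k + 1) :=
      mul_le_mul_of_nonneg_left (hsum1 x) (by positivity)
    have e2 := mul_le_of_le_one_right hcoef (hv1 x)
    nlinarith
  · have e0 : ∀ j, 1 / 2 ≤ w j (x j) := by
      intro j
      have hj := hx j (mem_univ j)
      simp only [w]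
      rw [Real.sin_sq_eq_half_sub]
      have : cos (2 * (β * (x j - a j))) ≤ 0 := by
        have hβs : β * s = π := by rw [hβ, div_mul_cancel₀ _ hs.ne']
        have f1 : β * (s / 4) ≤ β * (x j - a j) := by
          apply mul_le_mul_of_nonneg_left _ hβ0.le; linarith [hj.1]
        have f2 : β * (x j - a j) ≤ β * (3 * s / 4) := by
          apply mul_le_mul_of_nonneg_left _ hβ0.le; linarith [hj.2]
        apply Real.cos_nonpos_of_pi_div_two_le_of_le <;> linarith
      linarith
    have e1 : ∀ i, (1 / 2 : ℝ) ^ k ≤ E i x := by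
      intro i
      have : (1 / 2 : ℝ) ^ k = ∏ j ∈ Finset.univ.erase i, (1 / 2 : ℝ) := by
        rw [Finset.prod_const, Finset.card_erase_of_mem (Finset.mem_univ i)]; simp
      rw [this]
      exact Finset.prod_le_prod (fun _ _ => by norm_num) fun j _ => e0 j
    have e2 : (k + 1) * (1 / 2 : ℝ) ^ k ≤ ∑ i, E i x := by
      refine le_trans ?_ (Finset.sum_le_sum fun i _ => e1 i)
      simp
    simp only [hW]
    rw [← div_eq_inv_mul, le_div_iff₀ (by positivity)]
    have e3 := mul_nonneg hcoef (hv0 x)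
    have e4 : 2 * β ^ 2 * ((k + 1) * (1 / 2 : ℝ) ^ k) ≤ 2 * β ^ 2 * ∑ i, E i x :=
      mul_le_mul_of_nonneg_left e2 (by positivity)
    calc _ = 2 * β ^ 2 * ((k + 1) * (1 / 2 : ℝ) ^ k) := by ring
      _ ≤ _ := by linarith
  · rw [setIntegral_cell]
    have e1 : ∀ x, W x * ψ x = -(14 * (k + 1) * β ^ 2)⁻¹ * (lapP ψ x * v x - ψ x * lapP v x) := by
      intro x
      rw [hlap, hlapv]; simp only [hW]; ring
    simp only [e1]
    rw [integral_const_mul, hg, mul_zero]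

/-- The constant weight serves on the whole unit cube, used for small frequencies. -/
lemma integral_eq_zero_ucube {k : ℕ} {ψ : (Fin (k + 1) → ℝ) → ℝ} (hψ : ContDiff ℝ (⊤ : ℕ∞) ψ)
    (hper : ∀ x i, ψ (x + Pi.single i 1) = ψ x) {lam : ℝ} (hlam : 0 < lam)
    (hlap : ∀ x, lapP ψ x = -lam ^ 2 * ψ x) : ∫ x in cell 0 1, ψ x = 0 := by
  have h := fourier_coeff_eq_zero hψ hper hlap 0 (by simpa using (pow_pos hlam 2).ne)
  simp only [Pi.zero_apply, Int.cast_zero, neg_zero, zero_mul, ee_zero, Finset.prod_const_one,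
    one_mul] at h
  rw [integral_complex_ofReal] at h
  rw [setIntegral_cell]
  simp only [Pi.zero_apply, zero_add]
  exact_mod_cast h

/-! ### The nodal set in a single cell -/

lemma halfCell_subset {n : ℕ} (a : Fin n → ℝ) {s : ℝ} (hs : 0 < s) :
    halfCell a s ⊆ cell a s := by
  intro x hx i hi
  have := hx i hi
  simp only [mem_Icc, mem_Ico] at *
  constructor <;> linarith

lemma volume_halfCell {n : ℕ} (a : Fin n → ℝ) {s : ℝ} (hs : 0 < s) :
    volume (halfCell a s) = ENNReal.ofReal ((s / 2) ^ n) := by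
  unfold halfCell
  rw [volume_pi_pi]
  have : ∀ i, volume (Icc (a i + s / 4) (a i + 3 * s / 4)) = ENNReal.ofReal (s / 2) := fun i => by
    rw [Real.volume_Icc]; congr 1; ring
  simp only [this]
  rw [Finset.prod_const, Finset.card_univ, Fintype.card_fin, ENNReal.ofReal_pow (by positivity)]

/-- The cell lies in the cube `x + [-s, s]ⁿ` around each of its points `x`. -/
lemma setLIntegral_cell_le {n : ℕ} {a x : Fin n → ℝ} {s : ℝ} (hx : x ∈ cell a s)
    (f : (Fin n → ℝ) → ENNReal) :
    ∫⁻ y in cell a s, f y ≤ ∫⁻ h in Set.pi univ fun _ => Icc (-s) s, f (x + h) := by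
  rw [← lintegral_indicator (measurableSet_cell a s),
    ← lintegral_add_left_eq_self _ x, ← lintegral_indicator
      (MeasurableSet.univ_pi fun _ => measurableSet_Icc)]
  refine lintegral_mono fun h => ?_
  by_cases hh : x + h ∈ cell a s
  · rw [indicator_of_mem hh, indicator_of_mem]
    intro i hi
    have h1 := hh i hi
    have h2 := hx i hi
    simp only [Pi.add_apply, mem_Icc, mem_Ico] at *
    constructor <;> linarith
  · rw [indicator_of_notMem hh]; exact zero_le

lemma integrableOn_cell {n : ℕ} {f : (Fin n → ℝ) → ℝ} (hf : Continuous f) (a : Fin n → ℝ) (s : ℝ) :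
    IntegrableOn f (cell a s) :=
  (hf.continuousOn.integrableOn_compact
    (isCompact_univ_pi fun i => isCompact_Icc (a := a i) (b := a i + s))).mono_set
      (pi_mono fun _ _ => Ico_subset_Icc_self)

/-- The lower bound for `ψ` vanishing on a whole cell, where the nodal set is the cell itself. -/
lemma hausdorff_cell_of_zero {k : ℕ} {ψ : (Fin (k + 1) → ℝ) → ℝ}
    (a : Fin (k + 1) → ℝ) {s : ℝ} (hs : 0 < s) (h0 : ∀ x ∈ cell a s, ψ x = 0) :
    ENNReal.ofReal (s ^ k) ≤
      μH[(k : ℝ)] ((WithLp.toLp 2 : (Fin (k + 1) → ℝ) → EuclideanSpace ℝ (Fin (k + 1))) ''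
        {z ∈ cell a s | ψ z = 0}) := by
  refine le_trans ?_ (volume_proj_le_hausdorff 0 _)
  have : cell (fun l => a (Fin.succ l)) s ⊆
      (fun z : Fin (k + 1) → ℝ => fun l => z ((0 : Fin (k + 1)).succAbove l)) ''
        {z ∈ cell a s | ψ z = 0} := by
    intro y hy
    have hmem : (Fin.cons (a 0) y : Fin (k + 1) → ℝ) ∈ cell a s := by
      intro i _
      refine Fin.cases ?_ (fun l => ?_) i
      · simpa using hs
      · simpa using hy l (mem_univ l)
    exact ⟨Fin.cons (a 0) y, ⟨hmem, h0 _ hmem⟩, by ext l; simp⟩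
  refine le_trans ?_ (measure_mono this)
  rw [volume_cell, ENNReal.ofReal_pow hs.le]

/-- If `ψ` is orthogonal to the weight `W` on the cell and satisfies the doubling inequality off a
small exceptional set `B`, then the cell contains a definite amount of nodal set. -/
lemma good_cell {k : ℕ} {ψ W : (Fin (k + 1) → ℝ) → ℝ} (hψ : Continuous ψ) (hW : Continuous W)
    (a : Fin (k + 1) → ℝ) {s A : ℝ} (hs : 0 < s) (hA : 0 < A)
    (hW0 : ∀ x, 0 ≤ W x) (hW1 : ∀ x, W x ≤ 1)
    (hWh : ∀ x ∈ halfCell a s, (1 / 2 : ℝ) ^ k / 7 ≤ W x)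
    (horth : ∫ x in cell a s, W x * ψ x = 0)
    {B : Set (Fin (k + 1) → ℝ)} (hBm : MeasurableSet B)
    (hB : ∀ x ∈ cell a s, x ∉ B → ∫⁻ h in Set.pi univ fun _ => Icc (-s) s,
      ENNReal.ofReal (ψ (x + h) ^ 2) ≤ ENNReal.ofReal ((2 * s * A) ^ (k + 1) * ψ x ^ 2))
    (hBv : volume (B ∩ cell a s) ≤ ENNReal.ofReal ((1 / 2) ^ (k + 2) * s ^ (k + 1))) :
    ENNReal.ofReal (min 1 (((((1 / 2 : ℝ) ^ k / 7) * (1 / 2) ^ (k + 2) / 2) ^ 2 /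
        (2 * A) ^ (k + 1)) ^ 2 / (k + 1)) * s ^ k) ≤
      μH[(k : ℝ)] ((WithLp.toLp 2 : (Fin (k + 1) → ℝ) → EuclideanSpace ℝ (Fin (k + 1))) ''
        {z ∈ cell a s | ψ z = 0}) := by
  set ρ : ℝ := (1 / 2 : ℝ) ^ k / 7 with hρ
  set θ : ℝ := (1 / 2 : ℝ) ^ (k + 2) with hθ
  set c : ℝ := (2 * A) ^ (k + 1) with hc
  have hρ0 : 0 < ρ := by positivity
  have hθ0 : 0 < θ := by positivity
  have hc0 : 0 < c := by positivity
  set H := halfCell a s \ B with hH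
  have hhm : MeasurableSet (halfCell a s) := MeasurableSet.univ_pi fun _ => measurableSet_Icc
  have hHm : MeasurableSet H := hhm.diff hBm
  have hHc : H ⊆ cell a s := sdiff_subset.trans (halfCell_subset a hs)
  have hcfin : volume (cell a s) ≠ ⊤ := by
    rw [volume_cell]; exact ENNReal.pow_ne_top ENNReal.ofReal_ne_top
  have hHv : θ * s ^ (k + 1) ≤ volume.real H := by
    have e1 : volume.real (halfCell a s) ≤ volume.real H + volume.real (B ∩ cell a s) := by
      refine (measureReal_mono ?_ ?_).trans (measureReal_union_le _ _)
      · intro x hx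
        by_cases hxB : x ∈ B
        · exact Or.inr ⟨hxB, halfCell_subset a hs hx⟩
        · exact Or.inl ⟨hx, hxB⟩
      · exact measure_ne_top_of_subset (union_subset hHc inter_subset_right) hcfin
    have e2 : volume.real (B ∩ cell a s) ≤ θ * s ^ (k + 1) :=
      ENNReal.toReal_le_of_le_ofReal (by positivity) hBv
    have e3 : volume.real (halfCell a s) = 2 * θ * s ^ (k + 1) := by
      rw [measureReal_def, volume_halfCell a hs, ENNReal.toReal_ofReal (by positivity), hθ, div_pow,
        one_div, inv_pow, pow_succ 2 (k + 1)]
      field_simp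
    linarith
  set I := ∫ x in cell a s, ψ x ^ 2 with hI
  have hI0 : 0 ≤ I := integral_nonneg fun x => sq_nonneg _
  have hIl : ENNReal.ofReal I = ∫⁻ x in cell a s, ENNReal.ofReal (ψ x ^ 2) :=
    ofReal_integral_eq_lintegral_ofReal (integrableOn_cell (hψ.pow 2) a s)
      (Filter.Eventually.of_forall fun x => sq_nonneg _)
  have hdoub : ∀ x ∈ H, I ≤ c * s ^ (k + 1) * ψ x ^ 2 := by
    intro x hx
    have h1 := (setLIntegral_cell_le (hHc hx) fun y => ENNReal.ofReal (ψ y ^ 2)).trans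
      (hB x (hHc hx) hx.2)
    rw [← hIl, ENNReal.ofReal_le_ofReal_iff (by positivity)] at h1
    calc I ≤ _ := h1
      _ = _ := by rw [hc]; ring
  rcases hI0.eq_or_lt with hIz | hIp
  · have hz : ∀ x ∈ cell a s, ψ x = 0 := by
      have hae : ψ =ᵐ[volume.restrict (cell a s)] fun _ => 0 := by
        have := (setIntegral_eq_zero_iff_of_nonneg_ae
          (Filter.Eventually.of_forall fun x => sq_nonneg (ψ x))
          (integrableOn_cell (hψ.pow 2) a s)).1 hIz.symm
        filter_upwards [this] with x hx
        simpa using hx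
      refine Measure.eqOn_of_ae_eq hae hψ.continuousOn continuousOn_const ?_
      unfold cell
      rw [interior_pi_set finite_univ, closure_pi_set]
      refine pi_mono fun i _ => ?_
      rw [interior_Ico, closure_Ioo (by linarith)]
      exact Ico_subset_Icc_self
    refine le_trans (ENNReal.ofReal_le_ofReal ?_) (hausdorff_cell_of_zero a hs hz)
    exact mul_le_of_le_one_left (by positivity) (min_le_left _ _)
  · set b := √(I / (c * s ^ (k + 1))) with hb
    have hb0 : 0 < b := by positivity
    have hb2 : b ^ 2 = I / (c * s ^ (k + 1)) := Real.sq_sqrt (by positivity)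
    have hIb : I ≤ c * s ^ (k + 1) * b ^ 2 := by rw [hb2]; field_simp; exact le_rfl
    have hHψ : ∀ x ∈ H, b ≤ |ψ x| := by
      intro x hx
      rw [hb, Real.sqrt_le_iff, sq_abs]
      refine ⟨abs_nonneg _, ?_⟩
      rw [div_le_iff₀ (by positivity)]
      linarith [hdoub x hx]
    have hP := sign_cell hψ hW a hs hρ0 hθ0 hc0 hb0 (fun x _ => hW0 x) (fun x _ => hW1 x) horth hIb
      hHm hHc (fun x hx => hWh x hx.1) hHψ hHv
    have hN := sign_cell hψ.neg hW a hs hρ0 hθ0 hc0 hb0 (fun x _ => hW0 x) (fun x _ => hW1 x)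
      (by simp only [Pi.neg_apply, mul_neg]; rw [integral_neg, horth, neg_zero])
      (by simpa using hIb) hHm hHc (fun x hx => hWh x hx.1) (by simpa using hHψ) hHv
    have hlift : ∀ {E : Set (Fin (k + 1) → ℝ)} {r : ℝ}, E ⊆ cell a s → r ≤ volume.real E →
        ENNReal.ofReal r ≤ volume E := fun hE hr =>
      ENNReal.ofReal_le_of_le_toReal hr
    have := hausdorff_cell hψ a hs (κ := (ρ * θ / 2) ^ 2 / c) (by positivity)
      (hlift (fun x hx => hx.1) hP) (by simpa using hlift (fun x hx => hx.1) hN)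
    refine le_trans (ENNReal.ofReal_le_ofReal ?_) this
    exact mul_le_mul_of_nonneg_right (min_le_right _ _) (by positivity)

/-! ### Summation over a grid of cells -/

/-- The lower corners of the `mⁿ` cells of side `1/m` that tile the unit cube. -/
def corner {n m : ℕ} (j : Fin n → Fin m) : Fin n → ℝ := fun i => (j i : ℝ) / m

lemma cell_corner_subset {n m : ℕ} (hm : 0 < m) (j : Fin n → Fin m) :
    cell (corner j) (1 / m) ⊆ ucube n := by
  intro x hx i hi
  have h := hx i hi
  have hm' : (0 : ℝ) < m := by exact_mod_cast hm
  have hj : ((j i : ℕ) : ℝ) + 1 ≤ m := by exact_mod_cast (j i).2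
  simp only [corner, mem_Ico] at *
  refine ⟨le_trans (by positivity) h.1, h.2.trans_le ?_⟩
  rw [← add_div, div_le_one hm']
  exact hj

lemma disjoint_cell_corner {n m : ℕ} (hm : 0 < m) {j j' : Fin n → Fin m} (hne : j ≠ j') :
    Disjoint (cell (corner j) (1 / m)) (cell (corner j') (1 / m)) := by
  rw [Set.disjoint_left]
  intro x hx hx'
  apply hne
  ext i
  have h := hx i (mem_univ i)
  have h' := hx' i (mem_univ i)
  have hm' : (0 : ℝ) < m := by exact_mod_cast hm
  simp only [corner, mem_Ico, ← add_div, div_le_iff₀ hm', lt_div_iff₀ hm'] at h h'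
  have e1 : (j i : ℝ) < (j' i : ℝ) + 1 := h.1.trans_lt h'.2
  have e2 : (j' i : ℝ) < (j i : ℝ) + 1 := h'.1.trans_lt h.2
  norm_cast at e1 e2
  omega

/-- If the exceptional set `B` is small, at least half of the cells meet it in a small proportion;
adding up their contributions bounds the nodal set of the unit cube from below. -/
lemma sum_good_cells {k m : ℕ} (hm : 0 < m) {ψ : (Fin (k + 1) → ℝ) → ℝ} (hψ : Continuous ψ)
    {B : Set (Fin (k + 1) → ℝ)} (hBm : MeasurableSet B) {q : ℝ} (hq : 0 ≤ q)
    (hB : volume B ≤ ENNReal.ofReal ((1 / 2) ^ (k + 3)))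
    (hgood : ∀ j : Fin (k + 1) → Fin m, volume (B ∩ cell (corner j) (1 / m)) ≤
        ENNReal.ofReal ((1 / 2) ^ (k + 2) * (1 / (m : ℝ)) ^ (k + 1)) →
      ENNReal.ofReal (q * (1 / (m : ℝ)) ^ k) ≤
        μH[(k : ℝ)] ((WithLp.toLp 2 : (Fin (k + 1) → ℝ) → EuclideanSpace ℝ (Fin (k + 1))) ''
          {z ∈ cell (corner j) (1 / m) | ψ z = 0})) :
    ENNReal.ofReal (q / 2 * m) ≤
      μH[(k : ℝ)] ((WithLp.toLp 2 : (Fin (k + 1) → ℝ) → EuclideanSpace ℝ (Fin (k + 1))) ''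
        {z ∈ ucube (k + 1) | ψ z = 0}) := by
  classical
  have hm' : (0 : ℝ) < m := by exact_mod_cast hm
  set s : ℝ := 1 / m with hs
  set v : ℝ := (1 / 2) ^ (k + 2) * s ^ (k + 1) with hv
  have hv0 : 0 < v := by positivity
  set G : Finset (Fin (k + 1) → Fin m) :=
    Finset.univ.filter fun j => volume (B ∩ cell (corner j) s) ≤ ENNReal.ofReal v with hG
  have hbad : ((Gᶜ.card : ℕ) : ℝ) * v ≤ (1 / 2) ^ (k + 3) := by
    have e : ENNReal.ofReal (Gᶜ.card * v) ≤ ENNReal.ofReal ((1 / 2) ^ (k + 3)) := by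
      refine le_trans ?_ hB
      calc ENNReal.ofReal (Gᶜ.card * v) = ∑ j ∈ Gᶜ, ENNReal.ofReal v := by
            rw [Finset.sum_const, nsmul_eq_mul, ENNReal.ofReal_mul (by positivity),
              ENNReal.ofReal_natCast]
        _ ≤ ∑ j ∈ Gᶜ, volume (B ∩ cell (corner j) s) := by
            refine Finset.sum_le_sum fun j hj => ?_
            simp only [hG, Finset.mem_compl, Finset.mem_filter, Finset.mem_univ, true_and,
              not_le] at hj
            exact hj.le
        _ = volume (⋃ j ∈ Gᶜ, B ∩ cell (corner j) s) := by
            rw [measure_biUnion_finset]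
            · intro j _ j' _ hne
              exact (disjoint_cell_corner hm hne).mono inter_subset_right inter_subset_right
            · exact fun j _ => hBm.inter (measurableSet_cell _ _)
        _ ≤ volume B := measure_mono (iUnion₂_subset fun j _ => inter_subset_left)
    rwa [ENNReal.ofReal_le_ofReal_iff (by positivity)] at e
  have hsm : s ^ (k + 1) * (m : ℝ) ^ (k + 1) = 1 := by
    rw [← mul_pow, hs, one_div_mul_cancel hm'.ne', one_pow]
  have hcard : (m : ℝ) ^ (k + 1) / 2 ≤ (G.card : ℝ) := by
    have h1 : (G.card : ℝ) + Gᶜ.card = (m : ℝ) ^ (k + 1) := by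
      have := Finset.card_add_card_compl G
      rw [Fintype.card_pi, Finset.prod_const, Finset.card_univ, Fintype.card_fin,
        Fintype.card_fin] at this
      exact_mod_cast this
    have h2 : ((Gᶜ.card : ℕ) : ℝ) ≤ (m : ℝ) ^ (k + 1) / 2 := by
      refine le_of_mul_le_mul_right (hbad.trans_eq ?_) hv0
      calc (1 / 2 : ℝ) ^ (k + 3) = (1 / 2) ^ (k + 3) * (s ^ (k + 1) * (m : ℝ) ^ (k + 1)) := by
            rw [hsm, mul_one]
        _ = _ := by rw [hv]; ring
    linarith
  calc ENNReal.ofReal (q / 2 * m) ≤ ENNReal.ofReal (G.card * (q * s ^ k)) := by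
        refine ENNReal.ofReal_le_ofReal ?_
        calc q / 2 * m = (m : ℝ) ^ (k + 1) / 2 * (q * s ^ k) := by
              rw [hs, one_div, inv_pow]; field_simp; ring
          _ ≤ _ := mul_le_mul_of_nonneg_right hcard (by positivity)
    _ = ∑ j ∈ G, ENNReal.ofReal (q * s ^ k) := by
        rw [Finset.sum_const, nsmul_eq_mul, ENNReal.ofReal_mul (by positivity),
          ENNReal.ofReal_natCast]
    _ ≤ ∑ j ∈ G, μH[(k : ℝ)] ((WithLp.toLp 2 :
          (Fin (k + 1) → ℝ) → EuclideanSpace ℝ (Fin (k + 1))) ''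
          {z ∈ cell (corner j) s | ψ z = 0}) := by
        refine Finset.sum_le_sum fun j hj => hgood j ?_
        exact (Finset.mem_filter.1 hj).2
    _ = μH[(k : ℝ)] (⋃ j ∈ G, (WithLp.toLp 2 :
          (Fin (k + 1) → ℝ) → EuclideanSpace ℝ (Fin (k + 1))) ''
          {z ∈ cell (corner j) s | ψ z = 0}) := by
        rw [measure_biUnion_finset]
        · intro j _ j' _ hne
          refine (disjoint_image_iff (WithLp.toLp_injective 2)).2 ?_
          exact (disjoint_cell_corner hm hne).mono (fun x hx => hx.1) fun x hx => hx.1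
        · intro j _
          exact (MeasurableEquiv.toLp 2 (Fin (k + 1) → ℝ)).measurableEmbedding.measurableSet_image.2
            ((measurableSet_cell _ _).inter (measurableSet_eq_fun hψ.measurable measurable_const))
    _ ≤ _ := by
        refine measure_mono (iUnion₂_subset fun j _ => image_mono ?_)
        exact fun z hz => ⟨cell_corner_subset hm j hz.1, hz.2⟩

/-- The lower bound in plain coordinates `Fin (k + 1) → ℝ`: it is linear in the frequency. -/
lemma nodal_linear (k : ℕ) : ∃ C : ℝ, 0 < C ∧ ∀ lam : ℝ, 0 < lam →
    ∀ ψ : (Fin (k + 1) → ℝ) → ℝ, ContDiff ℝ (⊤ : ℕ∞) ψ →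
      (∀ x (m : Fin (k + 1) → ℤ), ψ (x + fun i => (m i : ℝ)) = ψ x) →
      (∀ x, lapP ψ x = -lam ^ 2 * ψ x) → (∃ x, ψ x ≠ 0) → 1 ≤ lam ∧
      ENNReal.ofReal (C * lam) ≤
        μH[(k : ℝ)] ((WithLp.toLp 2 : (Fin (k + 1) → ℝ) → EuclideanSpace ℝ (Fin (k + 1))) ''
          {z ∈ ucube (k + 1) | ψ z = 0}) := by
  set r : ℝ := √(k + 1) with hr
  have hr0 : 0 < r := by positivity
  have hr2 : r ^ 2 = k + 1 := Real.sq_sqrt (by positivity)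
  -- on a line, `ψ²` corresponds to a polynomial of degree at most `4 lam`, and `lam ≤ 4 π √n m`,
  -- so `s = 1 / m` times the degree is at most `16 π √n`
  obtain ⟨A, hA, hdoub⟩ := doubling_n (k + 1) ((1 / 2) ^ (k + 3) / (k + 1)) (16 * π * r)
    (by positivity) (by positivity)
  set q : ℝ := min 1 (((((1 / 2 : ℝ) ^ k / 7) * (1 / 2) ^ (k + 2) / 2) ^ 2 /
        (2 * A) ^ (k + 1)) ^ 2 / (k + 1)) with hq
  have hq0 : 0 < q := lt_min one_pos (by positivity)
  refine ⟨q / 2 / (4 * π * r), by positivity, fun lam hlam ψ hψ hper hlap hne => ?_⟩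
  obtain ⟨hlam2, D, hD, hT⟩ := exists_trigPoly hψ hper hlam hlap hne
  have hlam1 : 1 ≤ lam := by linarith [Real.pi_gt_three]
  refine ⟨hlam1, ?_⟩
  have hpi := Real.pi_pos
  -- `m = ⌊lam / (2π√n)⌋` puts `lam²` in the range of `exists_weight`; for `lam < 2π√n` a single
  -- cell with constant weight is used
  obtain ⟨m, hm, hmlam, hweight⟩ : ∃ m : ℕ, 0 < m ∧ lam ≤ 4 * π * r * m ∧
      ∀ j : Fin (k + 1) → Fin m, ∃ W : (Fin (k + 1) → ℝ) → ℝ, Continuous W ∧ (∀ x, 0 ≤ W x) ∧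
        (∀ x, W x ≤ 1) ∧ (∀ x ∈ halfCell (corner j) (1 / m), (1 / 2 : ℝ) ^ k / 7 ≤ W x) ∧
        ∫ x in cell (corner j) (1 / m), W x * ψ x = 0 := by
    rcases le_or_gt (2 * π * r) lam with h | h
    · set t := lam / (2 * π * r) with ht
      have ht1 : 1 ≤ t := by rw [ht, one_le_div (by positivity)]; exact h
      have htl : lam = 2 * π * r * t := by rw [ht]; field_simp
      have hfl : (1 : ℝ) ≤ ⌊t⌋₊ := by
        exact_mod_cast Nat.le_floor (by exact_mod_cast ht1)
      have h1 : (⌊t⌋₊ : ℝ) ≤ t := Nat.floor_le (by linarith)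
      have h2 : t ≤ 2 * ⌊t⌋₊ := by linarith [Nat.lt_floor_add_one t]
      have hm : 0 < ⌊t⌋₊ := by exact_mod_cast (zero_lt_one.trans_le hfl)
      refine ⟨⌊t⌋₊, hm, ?_, fun j => ?_⟩
      · rw [htl]
        calc 2 * π * r * t ≤ 2 * π * r * (2 * ⌊t⌋₊) := by gcongr
          _ = _ := by ring
      · have e : lam ^ 2 = 4 * (k + 1) * π ^ 2 * t ^ 2 := by rw [htl, ← hr2]; ring
        refine exists_weight hψ hlap _ (by positivity) ?_ ?_
        · rw [e, div_div_eq_mul_div, div_one]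
          calc 4 * ((k : ℝ) + 1) * (π * ⌊t⌋₊) ^ 2 = 4 * (k + 1) * π ^ 2 * (⌊t⌋₊ : ℝ) ^ 2 := by ring
            _ ≤ _ := by gcongr
        · rw [e, div_div_eq_mul_div, div_one]
          calc 4 * ((k : ℝ) + 1) * π ^ 2 * t ^ 2 ≤ 4 * (k + 1) * π ^ 2 * (2 * ⌊t⌋₊) ^ 2 := by gcongr
            _ = _ := by ring
    · refine ⟨1, one_pos, ?_, fun j => ⟨fun _ => 1, continuous_const, fun _ => zero_le_one,
        fun _ => le_rfl, fun _ _ => ?_, ?_⟩⟩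
      · have : 0 < π * r := by positivity
        push_cast; linarith
      · have : (1 / 2 : ℝ) ^ k ≤ 1 := pow_le_one₀ (by norm_num) (by norm_num)
        linarith
      · have hc : corner j = 0 := by ext i; simp [corner]
        rw [hc]
        simp only [Nat.cast_one, div_one, one_mul]
        refine integral_eq_zero_ucube hψ (fun x i => ?_) hlam hlap
        have := hper x (Pi.single i 1)
        rw [← this]
        congr 2
        ext l
        by_cases hl : l = i
        · subst hl; simp
        · simp [hl]
  have hm' : (0 : ℝ) < m := by exact_mod_cast hm
  have hvB := hdoub (4 * lam) (1 / m) (2 * D) (by linarith) (by positivity)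
    (by rw [one_div_mul_eq_div, div_le_iff₀ hm']; linarith) (by push_cast; linarith)
    (fun x => ψ x ^ 2) hT.sq (fun x => sq_nonneg _)
  set B := {x ∈ ucube (k + 1) | ENNReal.ofReal ((2 * (1 / (m : ℝ)) * A) ^ (k + 1) * ψ x ^ 2) <
        ∫⁻ h in Set.pi univ fun _ => Icc (-(1 / (m : ℝ))) (1 / m), ENNReal.ofReal (ψ (x + h) ^ 2)}
    with hB
  have hmain := sum_good_cells hm hψ.continuous (measurableSet_toMeasurable volume B) hq0.le
    (by
      rw [measure_toMeasurable]
      refine hvB.trans_eq ?_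
      congr 1; push_cast; field_simp)
    (fun j hj => by
      obtain ⟨W, hWc, hW0, hW1, hWh, horth⟩ := hweight j
      refine good_cell hψ.continuous hWc (corner j) (by positivity) hA hW0 hW1 hWh horth
        (measurableSet_toMeasurable volume B) (fun x hx hxB => ?_) hj
      have hx' : x ∉ B := fun h => hxB (subset_toMeasurable _ _ h)
      by_contra hcon
      exact hx' ⟨cell_corner_subset hm j hx, not_le.1 hcon⟩)
  refine le_trans (ENNReal.ofReal_le_ofReal ?_) hmain
  rw [div_mul_eq_mul_div, div_le_iff₀ (by positivity)]
  calc q / 2 * lam ≤ q / 2 * (4 * π * r * m) := by gcongr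
    _ = _ := by ring

/-! ### Passage to Euclidean space -/

/-- The Laplacian of the statement agrees with the one in the coordinates of `Fin n → ℝ`. -/
lemma lapP_toLp {n : ℕ} {φ : EuclideanSpace ℝ (Fin n) → ℝ} (hφ : ContDiff ℝ (⊤ : ℕ∞) φ)
    (x : Fin n → ℝ) : lapP (fun y => φ (WithLp.toLp 2 y)) x = lap φ (WithLp.toLp 2 x) := by
  have key : ∀ (u : EuclideanSpace ℝ (Fin n) → ℝ), Differentiable ℝ u → ∀ i (y : Fin n → ℝ),
      pd i (fun y => u (WithLp.toLp 2 y)) y =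
        fderiv ℝ u (WithLp.toLp 2 y) (EuclideanSpace.single i 1) := by
    intro u hu i y
    have h1 : HasFDerivAt (fun y : Fin n → ℝ => u (WithLp.toLp 2 y)) _ y :=
      HasFDerivAt.comp y (hu _).hasFDerivAt
        (PiLp.continuousLinearEquiv 2 ℝ fun _ : Fin n => ℝ).symm.hasFDerivAt
    unfold pd
    rw [h1.fderiv]
    rfl
  unfold lapP lap
  refine Finset.sum_congr rfl fun i _ => ?_
  have h1 : pd i (fun y => φ (WithLp.toLp 2 y)) = fun y : Fin n → ℝ =>
      (fun z => fderiv ℝ φ z (EuclideanSpace.single i 1)) (WithLp.toLp 2 y) :=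
    funext fun y => key φ (hφ.differentiable (by simp)) i y
  have h2 : ContDiff ℝ (⊤ : ℕ∞) (fderiv ℝ φ) := hφ.fderiv_right (by simp)
  rw [h1]
  exact key (fun z => fderiv ℝ φ z (EuclideanSpace.single i 1))
    ((h2.clm_apply contDiff_const).differentiable (by simp)) i x

theorem nodal_set_lower_bound (n : ℕ) (hn : 2 ≤ n) :
    ∃ C : ℝ, 0 < C ∧
      ∀ (lam : ℝ), 0 < lam →
        ∀ (φ : EuclideanSpace ℝ (Fin n) → ℝ), ContDiff ℝ (⊤ : ℕ∞) φ → ZPeriodic φ →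
          (∀ x, lap φ x = -lam ^ 2 * φ x) → (∫ x in Qcube n, (φ x) ^ 2) = 1 →
          μH[(n : ℝ) - 1] {x ∈ Qcube n | φ x = 0} ≥
            ENNReal.ofReal (C * lam ^ ((7 : ℝ) / 4 - 3 * (n : ℝ) / 4)) := by
  obtain ⟨k, rfl⟩ : ∃ k, n = k + 1 := ⟨n - 1, by omega⟩
  obtain ⟨C, hC, hmain⟩ := nodal_linear k
  refine ⟨C, hC, fun lam hlam φ hφ hper hlap hintg => ?_⟩
  have hψ : ContDiff ℝ (⊤ : ℕ∞) fun y : Fin (k + 1) → ℝ => φ (WithLp.toLp 2 y) :=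
    hφ.comp (PiLp.continuousLinearEquiv 2 ℝ fun _ : Fin (k + 1) => ℝ).symm.contDiff
  have hne : ∃ y : Fin (k + 1) → ℝ, φ (WithLp.toLp 2 y) ≠ 0 := by
    by_contra! h
    have h0 : ∀ x, φ x = 0 := fun x => h (WithLp.ofLp x)
    simp [h0] at hintg
  obtain ⟨hlam1, h⟩ := hmain lam hlam (fun y => φ (WithLp.toLp 2 y)) hψ
    (fun x m => hper (WithLp.toLp 2 x) m)
    (fun x => by rw [lapP_toLp hφ, hlap]) hne
  have hdim : ((k + 1 : ℕ) : ℝ) - 1 = k := by push_cast; ring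
  have himg : (WithLp.toLp 2 : (Fin (k + 1) → ℝ) → EuclideanSpace ℝ (Fin (k + 1))) ''
      {z ∈ ucube (k + 1) | φ (WithLp.toLp 2 z) = 0} = {x ∈ Qcube (k + 1) | φ x = 0} := by
    ext x
    constructor
    · rintro ⟨z, ⟨hz, hz0⟩, rfl⟩
      exact ⟨fun i => hz i (mem_univ i), hz0⟩
    · rintro ⟨hx, hx0⟩
      exact ⟨WithLp.ofLp x, ⟨fun i _ => hx i, hx0⟩, rfl⟩
  rw [himg] at h
  rw [hdim, ge_iff_le]
  refine le_trans (ENNReal.ofReal_le_ofReal ?_) h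
  refine mul_le_mul_of_nonneg_left ?_ hC.le
  have h2 : (2 : ℝ) ≤ ((k + 1 : ℕ) : ℝ) := by exact_mod_cast hn
  calc lam ^ ((7 : ℝ) / 4 - 3 * ((k + 1 : ℕ) : ℝ) / 4) ≤ lam ^ (1 : ℝ) :=
        Real.rpow_le_rpow_of_exponent_le hlam1 (by linarith)
    _ = lam := Real.rpow_one lam
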